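/- arXiv:1711.10889 — 9 statements merged into one kernel-verified Lean document; each statement's English description precedes it below -/
import Mathlib

section
/- Let E be a unital idempotent CPTP map on d×d complex matrices, let a ∈ (0,1)∪(1,2], and let ρ be a positive definite density matrix. Then the infimum over all positive definite density matrices σ with E(σ) = σ of the Tsallis-based relative entropy S̃_a(ρ|σ) equals (Tr((E(ρ^a))^{1/a}) − 1)/(a − 1), and it is attained at σ = (E(ρ^a))^{1/a} / Tr((E(ρ^a))^{1/a}). -/
open Matrix
open scoped ComplexOrder

/-- Matrix power `A ^ t` for real `t`, via the continuous functional calculus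
(applying `x ↦ x ^ t` to the eigenvalues of a Hermitian matrix `A`). -/
noncomputable def mpow {d : ℕ} (A : Matrix (Fin d) (Fin d) ℂ) (t : ℝ) :
    Matrix (Fin d) (Fin d) ℂ :=
  cfc (fun x : ℝ => x ^ t) A

/-- The Tsallis-based relative entropy
`S̃_a(ρ|σ) = ((Tr (ρ^a σ^(1-a)))^(1/a) - 1) / (a - 1)`. -/
noncomputable def tsallis {d : ℕ} (a : ℝ) (ρ σ : Matrix (Fin d) (Fin d) ℂ) : ℝ :=
  ((((mpow ρ a * mpow σ (1 - a)).trace).re) ^ (1 / a) - 1) / (a - 1)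

section helpers

variable {d : ℕ}

lemma cont_spec (A : Matrix (Fin d) (Fin d) ℂ) (hA : A.IsHermitian) (f : ℝ → ℝ) :
    ContinuousOn f (spectrum ℝ A) := by
  rw [hA.spectrum_real_eq_range_eigenvalues]
  exact (Set.finite_range _).continuousOn _

lemma cont_img (A : Matrix (Fin d) (Fin d) ℂ) (hA : A.IsHermitian) (f g : ℝ → ℝ) :
    ContinuousOn f (g '' spectrum ℝ A) := by
  rw [hA.spectrum_real_eq_range_eigenvalues]
  exact ((Set.finite_range _).image _).continuousOn _

lemma spec_pos (A : Matrix (Fin d) (Fin d) ℂ) (hA : A.PosDef) (x : ℝ)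
    (hx : x ∈ spectrum ℝ A) : 0 < x := by
  rw [hA.1.spectrum_real_eq_range_eigenvalues] at hx
  obtain ⟨i, rfl⟩ := hx
  exact hA.eigenvalues_pos i

lemma cfc_posDef (A : Matrix (Fin d) (Fin d) ℂ) (hA : A.PosDef) (f : ℝ → ℝ)
    (hf : ∀ x, 0 < x → 0 < f x) : (cfc f A).PosDef := by
  have hH : (cfc f A).IsHermitian := cfc_predicate f A
  rw [hH.posDef_iff_eigenvalues_pos]
  intro i
  have h := hH.eigenvalues_mem_spectrum_real i
  rw [cfc_map_spectrum f A hA.1.isSelfAdjoint (cont_spec A hA.1 f)] at h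
  obtain ⟨x, hx, h⟩ := h
  rw [← h]
  exact hf x (spec_pos A hA x hx)

lemma trace_cfc_mul (A B : Matrix (Fin d) (Fin d) ℂ) (hA : A.PosDef) (hB : B.PosDef) :
    ∃ (α β : Fin d → ℝ) (p : Fin d → Fin d → ℝ), (∀ j, 0 < α j) ∧ (∀ j, 0 < β j) ∧
      (∀ j k, 0 ≤ p j k) ∧
      ∀ f g : ℝ → ℝ, (cfc f A * cfc g B).trace.re = ∑ j, ∑ k, f (α j) * g (β k) * p j k := by
  refine ⟨hA.1.eigenvalues, hB.1.eigenvalues, fun j k =>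
    Complex.normSq (((hA.1.eigenvectorUnitary : Matrix (Fin d) (Fin d) ℂ)ᴴ *
      (hB.1.eigenvectorUnitary : Matrix (Fin d) (Fin d) ℂ)) j k), hA.eigenvalues_pos,
      hB.eigenvalues_pos, fun _ _ => Complex.normSq_nonneg _, ?_⟩
  intro f g
  rw [hA.1.cfc_eq, hB.1.cfc_eq, IsHermitian.cfc, IsHermitian.cfc,
    Unitary.conjStarAlgAut_apply, Unitary.conjStarAlgAut_apply]
  simp only [Unitary.coe_star, star_eq_conjTranspose]
  set U := (hA.1.eigenvectorUnitary : Matrix (Fin d) (Fin d) ℂ)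
  set V := (hB.1.eigenvectorUnitary : Matrix (Fin d) (Fin d) ℂ)
  set D := diagonal (RCLike.ofReal ∘ f ∘ hA.1.eigenvalues : Fin d → ℂ)
  set F := diagonal (RCLike.ofReal ∘ g ∘ hB.1.eigenvalues : Fin d → ℂ)
  have h : (U * D * Uᴴ * (V * F * Vᴴ)).trace = (D * (Uᴴ * V) * (F * (Uᴴ * V)ᴴ)).trace := by
    rw [conjTranspose_mul, conjTranspose_conjTranspose]
    simp only [Matrix.mul_assoc]
    rw [Matrix.trace_mul_comm U]
    simp only [Matrix.mul_assoc]
  rw [h]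
  generalize Uᴴ * V = W
  simp only [Matrix.trace, Matrix.diag_apply, Matrix.mul_apply (M := D * W), D, F, 
    Matrix.diagonal_mul, conjTranspose_apply, Complex.re_sum]
  refine Finset.sum_congr rfl fun j _ => Finset.sum_congr rfl fun k _ => ?_
  simp [Complex.normSq_apply]
  ring

lemma kraus_posDef {n : ℕ} (K : Fin n → Matrix (Fin d) (Fin d) ℂ)
    (h1 : ∑ i, K i * (K i)ᴴ = 1) (P : Matrix (Fin d) (Fin d) ℂ) (hP : P.PosDef) :
    (∑ i, K i * P * (K i)ᴴ).PosDef := by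
  have hps : (∑ i, K i * P * (K i)ᴴ).PosSemidef :=
    Matrix.posSemidef_sum _ fun i _ => hP.posSemidef.mul_mul_conjTranspose_same (K i)
  refine Matrix.PosDef.of_dotProduct_mulVec_pos hps.1 fun x hx => ?_
  have key : ∀ i, star x ⬝ᵥ ((K i * P * (K i)ᴴ) *ᵥ x)
      = star ((K i)ᴴ *ᵥ x) ⬝ᵥ (P *ᵥ ((K i)ᴴ *ᵥ x)) := by
    intro i
    simp only [star_mulVec, conjTranspose_conjTranspose, Matrix.dotProduct_mulVec,
      vecMul_vecMul, Matrix.mul_assoc, Matrix.mulVec_mulVec]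
  rw [Matrix.sum_mulVec, dotProduct_sum]
  simp only [key]
  have hex : ∃ i, (K i)ᴴ *ᵥ x ≠ 0 := by
    by_contra! hc
    apply hx
    have : (1 : Matrix (Fin d) (Fin d) ℂ) *ᵥ x = 0 := by
      rw [← h1, Matrix.sum_mulVec]
      refine Finset.sum_eq_zero fun i _ => ?_
      rw [← Matrix.mulVec_mulVec, hc i, Matrix.mulVec_zero]
    simpa using this
  obtain ⟨i, hi⟩ := hex
  exact Finset.sum_pos' (fun j _ => hP.posSemidef.dotProduct_mulVec_nonneg _)
    ⟨i, Finset.mem_univ _, hP.dotProduct_mulVec_pos hi⟩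

lemma kraus_comm {n : ℕ} (K : Fin n → Matrix (Fin d) (Fin d) ℂ)
    (h1 : ∑ i, K i * (K i)ᴴ = 1) (h2 : ∑ i, (K i)ᴴ * K i = 1)
    (X : Matrix (Fin d) (Fin d) ℂ) (hX : ∑ i, K i * X * (K i)ᴴ = X) (i : Fin n) :
    K i * X = X * K i := by
  have hXs : ∑ i, K i * Xᴴ * (K i)ᴴ = Xᴴ := by
    conv_rhs => rw [← hX]
    rw [conjTranspose_sum]
    simp [Matrix.mul_assoc]
  have e : ∑ i, (K i * X - X * K i) * (K i * X - X * K i)ᴴ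
      = (∑ i, K i * (X * Xᴴ) * (K i)ᴴ) - X * Xᴴ := by
    have : ∀ i, (K i * X - X * K i) * (K i * X - X * K i)ᴴ = K i * (X * Xᴴ) * (K i)ᴴ
      - (K i * X * (K i)ᴴ) * Xᴴ - X * (K i * Xᴴ * (K i)ᴴ) + X * (K i * (K i)ᴴ) * Xᴴ := by
      intro i
      simp only [conjTranspose_sub, conjTranspose_mul]
      noncomm_ring
    simp only [this, Finset.sum_add_distrib, Finset.sum_sub_distrib, ← Finset.sum_mul,
      ← Finset.mul_sum, hX, hXs, h1]
    simp
  have ht : (∑ i, (K i * X - X * K i) * (K i * X - X * K i)ᴴ).trace = 0 := by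
    rw [e, trace_sub, trace_sum]
    have : ∀ i, (K i * (X * Xᴴ) * (K i)ᴴ).trace = ((K i)ᴴ * K i * (X * Xᴴ)).trace := by
      intro i
      rw [Matrix.trace_mul_comm, Matrix.mul_assoc]
    simp only [this]
    rw [← trace_sum, ← Finset.sum_mul, h2, one_mul, sub_self]
  rw [trace_sum, Finset.sum_eq_zero_iff_of_nonneg
    (fun i _ => (posSemidef_self_mul_conjTranspose _).trace_nonneg)] at ht
  have := ht i (Finset.mem_univ i)
  rw [(posSemidef_self_mul_conjTranspose _).trace_eq_zero_iff,
    Matrix.self_mul_conjTranspose_eq_zero] at this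
  exact sub_eq_zero.mp this

/-- The scalar inequality, concave case. -/
lemma young_lt (a : ℝ) (h0 : 0 < a) (h1 : a < 1) (N x s : ℝ) (hN : 0 < N) (hx : 0 < x)
    (hs : 0 < s) : x * s ^ (1 - a) ≤ N ^ a * (a * (N⁻¹ * x ^ (1 / a)) + (1 - a) * s) := by
  have h := Real.geom_mean_le_arith_mean2_weighted (w₁ := a) (w₂ := 1 - a)
    (p₁ := N⁻¹ * x ^ (1 / a)) (p₂ := s) h0.le (by linarith) (by positivity) hs.le (by ring)
  have e : x = N ^ a * (N⁻¹ * x ^ (1 / a)) ^ a := by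
    rw [Real.mul_rpow (by positivity) (by positivity), ← Real.rpow_mul hx.le,
      one_div_mul_cancel h0.ne', Real.rpow_one, Real.inv_rpow hN.le, ← mul_assoc,
      mul_inv_cancel₀ (by positivity), one_mul]
  calc x * s ^ (1 - a) = N ^ a * ((N⁻¹ * x ^ (1 / a)) ^ a * s ^ (1 - a)) := by
        conv_lhs => rw [e]
        ring
    _ ≤ _ := by gcongr

/-- The scalar inequality, convex case. -/
lemma young_gt (a : ℝ) (h1 : 1 < a) (N x s : ℝ) (hN : 0 < N) (hx : 0 < x)
    (hs : 0 < s) : N ^ a * (a * (N⁻¹ * x ^ (1 / a)) + (1 - a) * s) ≤ x * s ^ (1 - a) := by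
  have h0 : 0 < a := by linarith
  have e : x = N ^ a * (N⁻¹ * x ^ (1 / a)) ^ a := by
    rw [Real.mul_rpow (by positivity) (by positivity), ← Real.rpow_mul hx.le,
      one_div_mul_cancel h0.ne', Real.rpow_one, Real.inv_rpow hN.le, ← mul_assoc,
      mul_inv_cancel₀ (by positivity), one_mul]
  set t := N⁻¹ * x ^ (1 / a) with ht
  have tp : 0 < t := by positivity
  have h := one_add_mul_self_le_rpow_one_add (s := t / s - 1) (by
    have : 0 < t / s := by positivity
    linarith) h1.le
  rw [add_sub_cancel, Real.div_rpow tp.le hs.le] at h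
  have h' : a * t + (1 - a) * s ≤ t ^ a * s ^ (1 - a) := by
    rw [Real.rpow_sub hs, Real.rpow_one]
    calc a * t + (1 - a) * s = (1 + a * (t / s - 1)) * s := by field_simp; ring
      _ ≤ (t ^ a / s ^ a) * s := by gcongr
      _ = _ := by ring
  calc _ ≤ N ^ a * (t ^ a * s ^ (1 - a)) := by gcongr
    _ = x * s ^ (1 - a) := by
        conv_rhs => rw [e]
        ring

end helpers

set_option maxHeartbeats 1000000 in
/-- For a unital idempotent CPTP map `E`, `a ∈ (0,1) ∪ (1,2]` and a positive definite
density matrix `ρ`, the infimum of the Tsallis relative entropy over positive definite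
density matrices fixed by `E` equals `(Tr((E(ρ^a))^(1/a)) - 1)/(a - 1)`, and it is
attained at `σ* = (E(ρ^a))^(1/a) / Tr((E(ρ^a))^(1/a))`. -/
theorem stmt_0 {d : ℕ}
    (E : Matrix (Fin d) (Fin d) ℂ →ₗ[ℂ] Matrix (Fin d) (Fin d) ℂ)
    (hKraus : ∃ (n : ℕ) (K : Fin n → Matrix (Fin d) (Fin d) ℂ),
      (∀ X, E X = ∑ i, K i * X * (K i)ᴴ) ∧ ∑ i, (K i)ᴴ * K i = 1)
    (hUnital : E 1 = 1)
    (hIdem : ∀ X, E (E X) = E X)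
    (a : ℝ) (ha : a ∈ Set.Ioo (0 : ℝ) 1 ∪ Set.Ioc (1 : ℝ) 2)
    (ρ : Matrix (Fin d) (Fin d) ℂ) (hρ : ρ.PosDef) (hρtr : ρ.trace = 1)
    (N : ℝ) (hN : N = ((mpow (E (mpow ρ a)) (1 / a)).trace).re)
    (σstar : Matrix (Fin d) (Fin d) ℂ)
    (hσstar : σstar = ((N : ℂ))⁻¹ • mpow (E (mpow ρ a)) (1 / a)) :
    (⨅ σ : {σ : Matrix (Fin d) (Fin d) ℂ // σ.PosDef ∧ σ.trace = 1 ∧ E σ = σ},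
        tsallis a ρ (σ : Matrix (Fin d) (Fin d) ℂ)) = (N - 1) / (a - 1) ∧
    σstar.PosDef ∧ σstar.trace = 1 ∧ E σstar = σstar ∧
    tsallis a ρ σstar = (N - 1) / (a - 1) := by
  obtain ⟨n, K, hK, hK2⟩ := hKraus
  have hK1 : ∑ i, K i * (K i)ᴴ = 1 := by
    rw [hK] at hUnital; simpa using hUnital
  have ha0 : 0 < a := by rcases ha with h | h <;> [exact h.1; linarith [h.1]]
  have ha1 : a ≠ 1 := by rcases ha with h | h <;> [exact h.2.ne; exact h.1.ne']
  -- fixed points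
  have hcomm : ∀ X, E X = X → ∀ i, Commute X (K i) := by
    intro X hX i
    exact (kraus_comm K hK1 hK2 X (by rw [← hK]; exact hX) i).symm
  have hfix : ∀ X, (∀ i, Commute X (K i)) → E X = X := by
    intro X hX
    rw [hK]
    calc ∑ i, K i * X * (K i)ᴴ = ∑ i, X * (K i * (K i)ᴴ) :=
          Finset.sum_congr rfl fun i _ => by rw [← (hX i).eq, Matrix.mul_assoc]
      _ = X := by rw [← Finset.mul_sum, hK1, mul_one]
  have htr : ∀ A B, (∀ i, Commute B (K i)) → (A * B).trace = (E A * B).trace := by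
    intro A B hB
    rw [hK, Finset.sum_mul, trace_sum]
    have : ∀ i, (K i * A * (K i)ᴴ * B).trace = ((K i)ᴴ * K i * (B * A)).trace := by
      intro i
      rw [Matrix.mul_assoc, Matrix.mul_assoc, Matrix.trace_mul_comm]
      have h3 := (hB i).eq
      simp only [Matrix.mul_assoc]
      rw [Matrix.trace_mul_comm]
      simp only [Matrix.mul_assoc]
      rw [← Matrix.mul_assoc B (K i), h3, Matrix.mul_assoc, Matrix.trace_mul_comm]
    simp only [this]
    rw [← trace_sum, ← Finset.sum_mul, hK2, one_mul, Matrix.trace_mul_comm]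
  set M := E (mpow ρ a) with hM
  have hMpd : M.PosDef := by
    rw [hM, hK]
    exact kraus_posDef K hK1 _ (cfc_posDef ρ hρ _ fun x hx => Real.rpow_pos_of_pos hx _)
  have hMK : ∀ i, Commute M (K i) := hcomm M (hIdem _)
  have hTpd : (mpow M (1 / a)).PosDef :=
    cfc_posDef M hMpd _ fun x hx => Real.rpow_pos_of_pos hx _
  have hd : Nonempty (Fin d) := by
    by_contra hne
    rw [not_nonempty_iff] at hne
    simp [Matrix.trace] at hρtr
  have hTtr : (mpow M (1 / a)).trace = (N : ℂ) := by
    have hp := hTpd.trace_pos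
    rw [Complex.lt_def] at hp
    apply Complex.ext
    · simp [hN]
    · simpa using hp.2.symm
  have hNpos : 0 < N := by
    have hp := hTpd.trace_pos
    rw [hTtr] at hp
    exact_mod_cast hp
  have hσ' : σstar = cfc (fun x : ℝ => N⁻¹ * x ^ (1 / a)) M := by
    rw [cfc_const_mul _ _ _ (cont_spec M hMpd.1 _), hσstar, ← Complex.ofReal_inv]
    ext i j
    simp [mpow]
  have h2 : σstar.PosDef := by
    rw [hσ']
    exact cfc_posDef M hMpd _ fun x hx => by positivity
  have h3 : σstar.trace = 1 := by
    rw [hσstar, trace_smul, hTtr, smul_eq_mul, inv_mul_cancel₀]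
    exact_mod_cast hNpos.ne'
  have hσK : ∀ i, Commute σstar (K i) := fun i => by
    rw [hσ']; exact (hMK i).cfc_real _
  have h4 : E σstar = σstar := hfix _ hσK
  have htrM : ∀ σ, E σ = σ → (mpow ρ a * mpow σ (1 - a)).trace =
      (cfc (fun x : ℝ => x) M * cfc (fun x : ℝ => x ^ (1 - a)) σ).trace := by
    intro σ hσ
    rw [htr _ (mpow σ (1 - a)) (fun i => (hcomm σ hσ i).cfc_real _), ← hM,
      cfc_id' ℝ M hMpd.1.isSelfAdjoint]
    rfl
  have hNN : (N ^ a) ^ (1 / a) = N := by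
    rw [← Real.rpow_mul hNpos.le, mul_one_div_cancel ha0.ne', Real.rpow_one]
  have h5 : tsallis a ρ σstar = (N - 1) / (a - 1) := by
    have hc : cfc (fun x : ℝ => x) M * cfc (fun x : ℝ => x ^ (1 - a)) σstar
        = cfc (fun x : ℝ => N ^ (a - 1) * x ^ (1 / a)) M := by
      rw [hσ', ← cfc_comp' _ _ M (cont_img M hMpd.1 _ _) (cont_spec M hMpd.1 _) hMpd.1.isSelfAdjoint,
        ← cfc_mul _ _ M (cont_spec M hMpd.1 _) (cont_spec M hMpd.1 _)]
      refine cfc_congr fun x hx => ?_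
      have hx := spec_pos M hMpd x hx
      have e1 : N⁻¹ ^ (1 - a) = N ^ (a - 1) := by
        rw [Real.inv_rpow hNpos.le, ← Real.rpow_neg hNpos.le, neg_sub]
      have e2 : x * (x ^ (1 / a)) ^ (1 - a) = x ^ (1 / a) := by
        rw [← Real.rpow_mul hx.le, ← Real.rpow_one_add' hx.le]
        · congr 1; field_simp; ring
        · have : 1 + 1 / a * (1 - a) = 1 / a := by field_simp; ring
          rw [this]; positivity
      rw [Real.mul_rpow (by positivity) (by positivity), e1, mul_left_comm, e2]
    have : ((mpow ρ a * mpow σstar (1 - a)).trace).re = N ^ a := by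
      rw [htrM _ h4, hc, cfc_const_mul _ _ _ (cont_spec M hMpd.1 _), trace_smul]
      change (N ^ (a - 1) • (mpow M (1 / a)).trace).re = _
      rw [hTtr, Complex.real_smul, ← Complex.ofReal_mul, Complex.ofReal_re,
        Real.rpow_sub hNpos, Real.rpow_one, div_mul_cancel₀ _ hNpos.ne']
    rw [tsallis, this, hNN]
  have hlow : ∀ σ : Matrix (Fin d) (Fin d) ℂ, σ.PosDef → σ.trace = 1 → E σ = σ →
      (N - 1) / (a - 1) ≤ tsallis a ρ σ := by
    intro σ hσ hσt hσE
    obtain ⟨α, β, p, hα, hβ, hp, hfg⟩ := trace_cfc_mul M σ hMpd hσ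
    have c1 := hfg (fun x => x ^ (1 / a)) (fun _ => 1)
    have c2 := hfg (fun _ => 1) (fun x => x)
    have c3 := hfg (fun x => x) (fun x => x ^ (1 - a))
    rw [cfc_const_one ℝ σ hσ.1.isSelfAdjoint, mul_one] at c1
    rw [cfc_const_one ℝ M hMpd.1.isSelfAdjoint, one_mul, cfc_id' ℝ σ hσ.1.isSelfAdjoint, hσt] at c2
    change (mpow M (1 / a)).trace.re = _ at c1
    rw [hTtr, Complex.ofReal_re] at c1
    rw [← htrM σ hσE] at c3
    have hsum : ∑ j, ∑ k, N ^ a * (a * (N⁻¹ * α j ^ (1 / a)) + (1 - a) * β k) * p j k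
        = N ^ a := by
      have hs : ∑ j, ∑ k, N ^ a * (a * (N⁻¹ * α j ^ (1 / a)) + (1 - a) * β k) * p j k
          = N ^ a * a * N⁻¹ * (∑ j, ∑ k, α j ^ (1 / a) * 1 * p j k)
            + N ^ a * (1 - a) * (∑ j, ∑ k, 1 * β k * p j k) := by
        simp only [Finset.mul_sum, ← Finset.sum_add_distrib]
        exact Finset.sum_congr rfl fun j _ => Finset.sum_congr rfl fun k _ => by ring
      rw [hs, ← c1, ← c2, Complex.one_re, mul_assoc (N ^ a * a), inv_mul_cancel₀ hNpos.ne']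
      ring
    rw [tsallis, c3]
    have hTn : 0 ≤ ∑ j, ∑ k, α j * β k ^ (1 - a) * p j k :=
      Finset.sum_nonneg fun j _ => Finset.sum_nonneg fun k _ =>
        mul_nonneg (mul_nonneg (hα j).le (Real.rpow_nonneg (hβ k).le _)) (hp j k)
    rcases ha with h | h
    · have hle : ∑ j, ∑ k, α j * β k ^ (1 - a) * p j k ≤ N ^ a := by
        rw [← hsum]
        exact Finset.sum_le_sum fun j _ => Finset.sum_le_sum fun k _ =>
          mul_le_mul_of_nonneg_right (young_lt a ha0 h.2 N _ _ hNpos (hα j) (hβ k)) (hp j k)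
      have := Real.rpow_le_rpow hTn hle (z := 1 / a) (by positivity)
      rw [hNN] at this
      exact div_le_div_of_nonpos_of_le (by linarith [h.2]) (by linarith)
    · have hle : N ^ a ≤ ∑ j, ∑ k, α j * β k ^ (1 - a) * p j k := by
        conv_lhs => rw [← hsum]
        exact Finset.sum_le_sum fun j _ => Finset.sum_le_sum fun k _ =>
          mul_le_mul_of_nonneg_right (young_gt a h.1 N _ _ hNpos (hα j) (hβ k)) (hp j k)
      have := Real.rpow_le_rpow (by positivity) hle (z := 1 / a) (by positivity)
      rw [hNN] at this
      exact div_le_div_of_nonneg_right (by linarith) (by linarith [h.1])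
  refine ⟨?_, h2, h3, h4, h5⟩
  have : Nonempty {σ : Matrix (Fin d) (Fin d) ℂ // σ.PosDef ∧ σ.trace = 1 ∧ E σ = σ} :=
    ⟨⟨σstar, h2, h3, h4⟩⟩
  have hb : BddBelow (Set.range fun σ : {σ : Matrix (Fin d) (Fin d) ℂ //
      σ.PosDef ∧ σ.trace = 1 ∧ E σ = σ} => tsallis a ρ σ.1) := by
    refine ⟨(N - 1) / (a - 1), ?_⟩
    rintro _ ⟨σ, rfl⟩
    exact hlow σ.1 σ.2.1 σ.2.2.1 σ.2.2.2
  apply le_antisymm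
  · have hle := ciInf_le hb ⟨σstar, h2, h3, h4⟩
    simp only [h5] at hle
    exact hle
  · exact le_ciInf fun σ => hlow σ.1 σ.2.1 σ.2.2.1 σ.2.2.2
end

section
/- Let E be a unital idempotent CPTP map on d×d complex matrices, let a ∈ (0,1)∪(1,2], let ρ be a positive definite density matrix, and set N = Tr((E(ρ^a))^{1/a}) and σ* = (E(ρ^a))^{1/a}/N. Then σ* is a positive definite density matrix, E(σ*) = σ*, and S̃_a(ρ|σ*) = (N − 1)/(a − 1). -/
open Matrix
open scoped ComplexOrder

section helpers

open scoped MatrixOrder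

variable {d : ℕ}

lemma aux_contOn (f : ℝ → ℝ) (A : Matrix (Fin d) (Fin d) ℂ) :
    ContinuousOn f (spectrum ℝ A) :=
  (Matrix.finite_real_spectrum (A := A)).continuousOn f

lemma aux_spec_pos {A : Matrix (Fin d) (Fin d) ℂ} (hA : A.PosDef) {x : ℝ}
    (hx : x ∈ spectrum ℝ A) : 0 < x :=
  (Matrix.isStrictlyPositive_iff_posDef.mpr hA).spectrum_pos hx

lemma aux_cfc_posDef {A : Matrix (Fin d) (Fin d) ℂ} (hA : A.PosDef) (f : ℝ → ℝ)
    (hf : ∀ x, 0 < x → 0 < f x) : (cfc f A).PosDef := by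
  rw [← Matrix.isStrictlyPositive_iff_posDef,
    StarOrderedRing.isStrictlyPositive_iff_spectrum_pos (R := ℝ) _ (cfc_predicate f A)]
  rw [cfc_map_spectrum (R := ℝ) f A hA.isHermitian.isSelfAdjoint (aux_contOn f A)]
  rintro _ ⟨x, hx, rfl⟩
  exact hf x (aux_spec_pos hA hx)

lemma aux_kraus_posDef {n : ℕ} (K : Fin n → Matrix (Fin d) (Fin d) ℂ)
    (hU : ∑ i, K i * (K i)ᴴ = 1) {A : Matrix (Fin d) (Fin d) ℂ} (hA : A.PosDef) :
    (∑ i, K i * A * (K i)ᴴ).PosDef := by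
  have hps : ∀ i, (K i * A * (K i)ᴴ).PosSemidef := fun i =>
    hA.posSemidef.mul_mul_conjTranspose_same (K i)
  have hS : (∑ i, K i * A * (K i)ᴴ).PosSemidef := Matrix.posSemidef_sum _ fun i _ => hps i
  rw [Matrix.posDef_iff_dotProduct_mulVec]
  refine ⟨hS.isHermitian, fun x hx => ?_⟩
  have key : ∀ i, star x ⬝ᵥ ((K i * A * (K i)ᴴ) *ᵥ x)
      = star ((K i)ᴴ *ᵥ x) ⬝ᵥ (A *ᵥ ((K i)ᴴ *ᵥ x)) := by
    intro i
    rw [Matrix.star_mulVec, Matrix.conjTranspose_conjTranspose, ← Matrix.mulVec_mulVec,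
      ← Matrix.mulVec_mulVec, Matrix.dotProduct_mulVec]
  rw [Matrix.sum_mulVec, dotProduct_sum]
  have hex : ∃ i, (K i)ᴴ *ᵥ x ≠ 0 := by
    by_contra! h
    apply hx
    have : (∑ i, K i * (K i)ᴴ) *ᵥ x = 0 := by
      rw [Matrix.sum_mulVec]
      refine Finset.sum_eq_zero fun i _ => ?_
      rw [← Matrix.mulVec_mulVec, h i, Matrix.mulVec_zero]
    rwa [hU, Matrix.one_mulVec] at this
  obtain ⟨i, hi⟩ := hex
  refine Finset.sum_pos' (fun j _ => ?_) ⟨i, Finset.mem_univ i, ?_⟩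
  · exact (hps j).dotProduct_mulVec_nonneg x
  · rw [key]
    exact hA.dotProduct_mulVec_pos hi

/-- Selfadjoint fixed points of a unital channel commute with its Kraus operators. -/
lemma aux_commute {n : ℕ} (K : Fin n → Matrix (Fin d) (Fin d) ℂ)
    (hT : ∑ i, (K i)ᴴ * K i = 1)
    (hU : ∑ i, K i * (K i)ᴴ = 1) {X : Matrix (Fin d) (Fin d) ℂ} (hX : Xᴴ = X)
    (hfix : ∑ i, K i * X * (K i)ᴴ = X) (i : Fin n) : K i * X = X * K i := by
  have h1 : ∀ i, (K i * X - X * K i) * (K i * X - X * K i)ᴴ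
      = K i * (X * X) * (K i)ᴴ - (K i * X * (K i)ᴴ) * X - X * (K i * X * (K i)ᴴ)
        + X * (K i * (K i)ᴴ) * X := by
    intro i
    rw [Matrix.conjTranspose_sub, Matrix.conjTranspose_mul, Matrix.conjTranspose_mul, hX]
    noncomm_ring
  have htr : (∑ i, K i * (X * X) * (K i)ᴴ).trace = (X * X).trace := by
    rw [Matrix.trace_sum]
    have : ∀ i, (K i * (X * X) * (K i)ᴴ).trace = (((K i)ᴴ * K i) * (X * X)).trace := by
      intro i
      rw [Matrix.trace_mul_comm, Matrix.mul_assoc]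
    simp_rw [this]
    rw [← Matrix.trace_sum, ← Finset.sum_mul, hT, one_mul]
  have h2 : ∑ i, ((K i * X - X * K i) * (K i * X - X * K i)ᴴ).trace = 0 := by
    rw [← Matrix.trace_sum]
    simp_rw [h1]
    rw [Finset.sum_add_distrib, Finset.sum_sub_distrib, Finset.sum_sub_distrib,
      ← Finset.sum_mul, ← Finset.mul_sum, hfix, ← Finset.sum_mul, ← Finset.mul_sum, hU,
      Matrix.trace_add, Matrix.trace_sub, Matrix.trace_sub, htr, mul_one]
    ring
  have h3 := (Finset.sum_eq_zero_iff_of_nonneg (fun i _ =>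
    (Matrix.posSemidef_self_mul_conjTranspose (K i * X - X * K i)).trace_nonneg)).mp h2 i
      (Finset.mem_univ i)
  exact sub_eq_zero.mp (Matrix.trace_mul_conjTranspose_self_eq_zero_iff.mp h3)

end helpers

/-- For a unital idempotent CPTP map `E`, `a ∈ (0,1) ∪ (1,2]`, a positive definite
density matrix `ρ`, `N = Tr((E(ρ^a))^(1/a))` and `σ* = (E(ρ^a))^(1/a)/N`:
`σ*` is a positive definite density matrix, fixed by `E`, with
`S̃_a(ρ|σ*) = (N - 1)/(a - 1)`. -/
theorem stmt_1 {d : ℕ}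
    (E : Matrix (Fin d) (Fin d) ℂ →ₗ[ℂ] Matrix (Fin d) (Fin d) ℂ)
    (hKraus : ∃ (n : ℕ) (K : Fin n → Matrix (Fin d) (Fin d) ℂ),
      (∀ X, E X = ∑ i, K i * X * (K i)ᴴ) ∧ ∑ i, (K i)ᴴ * K i = 1)
    (hUnital : E 1 = 1)
    (hIdem : ∀ X, E (E X) = E X)
    (a : ℝ) (ha : a ∈ Set.Ioo (0 : ℝ) 1 ∪ Set.Ioc (1 : ℝ) 2)
    (ρ : Matrix (Fin d) (Fin d) ℂ) (hρ : ρ.PosDef) (hρtr : ρ.trace = 1)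
    (N : ℝ) (hN : N = ((mpow (E (mpow ρ a)) (1 / a)).trace).re)
    (σstar : Matrix (Fin d) (Fin d) ℂ)
    (hσstar : σstar = ((N : ℂ))⁻¹ • mpow (E (mpow ρ a)) (1 / a)) :
    σstar.PosDef ∧ σstar.trace = 1 ∧ E σstar = σstar ∧
    tsallis a ρ σstar = (N - 1) / (a - 1) := by
  obtain ⟨n, K, hE, hT⟩ := hKraus
  have hU : ∑ i, K i * (K i)ᴴ = 1 := by
    have := hE 1
    rw [hUnital] at this
    simpa using this.symm
  have ha0 : 0 < a := by
    rcases ha with h | h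
    · exact h.1
    · linarith [h.1]
  have hρa : (mpow ρ a).PosDef := aux_cfc_posDef hρ _ fun x hx => Real.rpow_pos_of_pos hx a
  obtain ⟨X, hXdef⟩ : ∃ X, X = E (mpow ρ a) := ⟨_, rfl⟩
  rw [← hXdef] at hN hσstar
  have hX : X.PosDef := by
    rw [hXdef, hE]
    exact aux_kraus_posDef K hU hρa
  have hXfix : ∑ i, K i * X * (K i)ᴴ = X := by
    rw [← hE, hXdef, hIdem]
  have hcomm := aux_commute K hT hU hX.isHermitian hXfix
  have hcommf : ∀ (f : ℝ → ℝ) i, K i * cfc f X = cfc f X * K i := fun f i =>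
    ((show Commute X (K i) from (hcomm i).symm).cfc_real f).eq.symm
  have hcommf' : ∀ (f : ℝ → ℝ) i, (K i)ᴴ * cfc f X = cfc f X * (K i)ᴴ := by
    intro f i
    have hsa : (cfc f X)ᴴ = cfc f X := (cfc_predicate f X : IsSelfAdjoint (cfc f X))
    have := congrArg Matrix.conjTranspose (hcommf f i)
    rw [Matrix.conjTranspose_mul, Matrix.conjTranspose_mul, hsa] at this
    exact this.symm
  have hmod : ∀ (f : ℝ → ℝ) Y, E (Y * cfc f X) = E Y * cfc f X := by
    intro f Y
    rw [hE, hE, Finset.sum_mul]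
    refine Finset.sum_congr rfl fun i _ => ?_
    rw [Matrix.mul_assoc (K i * Y), hcommf' f i]
    simp only [Matrix.mul_assoc]
  have hEtr : ∀ Y, (E Y).trace = Y.trace := by
    intro Y
    rw [hE, Matrix.trace_sum]
    have : ∀ i, (K i * Y * (K i)ᴴ).trace = (((K i)ᴴ * K i) * Y).trace := by
      intro i
      rw [Matrix.trace_mul_comm, Matrix.mul_assoc]
    simp_rw [this]
    rw [← Matrix.trace_sum, ← Finset.sum_mul, hT, one_mul]
  have hne : Nonempty (Fin d) := by
    by_contra h
    rw [not_nonempty_iff] at h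
    simp [Matrix.trace] at hρtr
  have hP : (mpow X (1 / a)).PosDef :=
    aux_cfc_posDef hX _ fun x hx => Real.rpow_pos_of_pos hx _
  have hPtr := hP.trace_pos
  have hNC : (mpow X (1 / a)).trace = (N : ℂ) := by
    rw [hN]
    exact (Complex.ext rfl (by simpa using (Complex.lt_def.mp hPtr).2.symm))
  have hN0 : 0 < N := by
    rw [hNC] at hPtr
    exact_mod_cast hPtr
  have hσ : σstar = cfc (fun x : ℝ => N⁻¹ * x ^ (1 / a)) X := by
    rw [cfc_const_mul (R := ℝ) N⁻¹ (fun x : ℝ => x ^ (1 / a)) X (aux_contOn _ X), hσstar]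
    ext i j
    simp [mpow]
  refine ⟨?_, ?_, ?_, ?_⟩
  · rw [hσ]
    exact aux_cfc_posDef hX _ fun x hx => mul_pos (inv_pos.mpr hN0) (Real.rpow_pos_of_pos hx _)
  · rw [hσstar, Matrix.trace_smul, hNC, smul_eq_mul, inv_mul_cancel₀]
    exact_mod_cast hN0.ne'
  · have := hmod (fun x : ℝ => N⁻¹ * x ^ (1 / a)) 1
    rw [one_mul, hUnital, one_mul] at this
    rw [hσ, this]
  · have hXsa : IsSelfAdjoint X := hX.isHermitian.isSelfAdjoint
    have h1 : mpow σstar (1 - a)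
        = cfc (fun x : ℝ => (N⁻¹ * x ^ (1 / a)) ^ (1 - a)) X := by
      rw [hσ, mpow]
      exact (cfc_comp' (R := ℝ) (fun x : ℝ => x ^ (1 - a)) (fun x : ℝ => N⁻¹ * x ^ (1 / a)) X
        (((Matrix.finite_real_spectrum (A := X)).image _).continuousOn _)
        (aux_contOn _ X) hXsa).symm
    have h2 : X * cfc (fun x : ℝ => (N⁻¹ * x ^ (1 / a)) ^ (1 - a)) X
        = cfc (fun x : ℝ => N ^ (a - 1) * x ^ (1 / a)) X := by
      conv_lhs => enter [1]; rw [← cfc_id' ℝ X hXsa]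
      rw [← cfc_mul (R := ℝ) _ _ X (aux_contOn _ X) (aux_contOn _ X)]
      refine cfc_congr fun x hx => ?_
      have hx0 := aux_spec_pos hX hx
      rw [Real.mul_rpow (inv_pos.mpr hN0).le (Real.rpow_pos_of_pos hx0 _).le,
        Real.inv_rpow hN0.le, ← Real.rpow_neg hN0.le, ← Real.rpow_mul hx0.le, neg_sub,
        mul_left_comm]
      congr 1
      nth_rewrite 1 [← Real.rpow_one x]
      rw [← Real.rpow_add hx0]
      congr 1
      field_simp
      ring
    have h3 : (mpow ρ a * mpow σstar (1 - a)).trace = ((N ^ a : ℝ) : ℂ) := by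
      rw [← hEtr, h1, hmod, ← hXdef, h2,
        cfc_const_mul (R := ℝ) _ (fun x : ℝ => x ^ (1 / a)) X (aux_contOn _ X),
        Matrix.trace_smul]
      change (N ^ (a - 1)) • (mpow X (1 / a)).trace = _
      rw [hNC, Complex.real_smul, ← Complex.ofReal_mul]
      congr 1
      nth_rewrite 2 [← Real.rpow_one N]
      rw [← Real.rpow_add hN0]
      congr 1
      ring
    rw [tsallis, h3, Complex.ofReal_re, ← Real.rpow_mul hN0.le, mul_one_div_cancel ha0.ne',
      Real.rpow_one]
end

section
/- Let E be a unital idempotent CPTP map on d×d complex matrices, let a ∈ (0,1)∪(1,2], and let ρ be a positive definite density matrix. Then for every positive definite density matrix σ with E(σ) = σ one has S̃_a(ρ|σ) ≥ (Tr((E(ρ^a))^{1/a}) − 1)/(a − 1). -/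
open Matrix
open scoped ComplexOrder

lemma aux_commute_s2 {d n : ℕ} (K : Fin n → Matrix (Fin d) (Fin d) ℂ)
    (hTP : ∑ i, (K i)ᴴ * K i = 1) (hU : ∑ i, K i * (K i)ᴴ = 1)
    (σ : Matrix (Fin d) (Fin d) ℂ) (hσ : σ.IsHermitian)
    (hfix : ∑ i, K i * σ * (K i)ᴴ = σ) (i : Fin n) : Commute σ (K i) := by
  have key : ∑ i, (K i * σ - σ * K i) * (K i * σ - σ * K i)ᴴ
      = (∑ i, K i * (σ * σ) * (K i)ᴴ) - (∑ i, K i * σ * (K i)ᴴ) * σ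
        - σ * (∑ i, K i * σ * (K i)ᴴ) + σ * (∑ i, K i * (K i)ᴴ) * σ := by
    rw [Finset.sum_mul, Finset.mul_sum, Finset.mul_sum, Finset.sum_mul,
      ← Finset.sum_sub_distrib, ← Finset.sum_sub_distrib, ← Finset.sum_add_distrib]
    refine Finset.sum_congr rfl fun j _ => ?_
    rw [conjTranspose_sub, conjTranspose_mul, conjTranspose_mul, hσ.eq]
    noncomm_ring
  have ht : (∑ i, K i * (σ * σ) * (K i)ᴴ).trace = (σ * σ).trace := by
    rw [trace_sum]
    calc ∑ i, (K i * (σ * σ) * (K i)ᴴ).trace = ∑ i, ((K i)ᴴ * K i * (σ * σ)).trace := by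
          refine Finset.sum_congr rfl fun j _ => ?_
          rw [trace_mul_comm, ← mul_assoc]
      _ = (σ * σ).trace := by rw [← trace_sum, ← Finset.sum_mul, hTP, one_mul]
  have h0 : ∑ i, ((K i * σ - σ * K i) * (K i * σ - σ * K i)ᴴ).trace = 0 := by
    rw [← trace_sum, key, hfix, hU, mul_one, sub_add_cancel, trace_sub, ht, sub_self]
  rw [Finset.sum_eq_zero_iff_of_nonneg
    (fun j _ => (posSemidef_self_mul_conjTranspose _).trace_nonneg)] at h0
  have := trace_mul_conjTranspose_self_eq_zero_iff.1 (h0 i (Finset.mem_univ _))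
  exact (sub_eq_zero.1 this).symm

lemma aux_trace {d n : ℕ} (K : Fin n → Matrix (Fin d) (Fin d) ℂ)
    (hTP : ∑ i, (K i)ᴴ * K i = 1) (G X : Matrix (Fin d) (Fin d) ℂ)
    (hG : ∀ i, Commute G (K i)) :
    ((∑ i, K i * X * (K i)ᴴ) * G).trace = (X * G).trace := by
  rw [Finset.sum_mul, trace_sum]
  calc ∑ i, (K i * X * (K i)ᴴ * G).trace = ∑ i, (((K i)ᴴ * K i) * (G * X)).trace := by
        refine Finset.sum_congr rfl fun j _ => ?_
        have h := (hG j).eq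
        rw [mul_assoc, mul_assoc, trace_mul_comm, mul_assoc, mul_assoc, h, trace_mul_comm]
        simp only [mul_assoc]
    _ = (X * G).trace := by
        rw [← trace_sum, ← Finset.sum_mul, hTP, one_mul, trace_mul_comm]

lemma aux_psd {d : ℕ} (A : Matrix (Fin d) (Fin d) ℂ) (hA : A.PosSemidef) (t : ℝ) :
    (mpow A t).PosSemidef := by
  unfold mpow
  rw [hA.1.cfc_eq, IsHermitian.cfc, Unitary.conjStarAlgAut_apply]
  refine PosSemidef.mul_mul_conjTranspose_same ?_ _
  rw [posSemidef_diagonal_iff]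
  intro i
  simp only [Function.comp_apply]
  exact Complex.zero_le_real.2 (Real.rpow_nonneg (hA.eigenvalues_nonneg i) _)

lemma aux_trpow {d : ℕ} (A : Matrix (Fin d) (Fin d) ℂ) (hA : A.IsHermitian) (t : ℝ) :
    (mpow A t).trace.re = ∑ i, hA.eigenvalues i ^ t := by
  unfold mpow
  rw [hA.cfc_eq, IsHermitian.cfc, Unitary.conjStarAlgAut_apply, trace_mul_comm, ← mul_assoc]
  simp [trace_diagonal]

lemma aux_weights {d : ℕ} (A B : Matrix (Fin d) (Fin d) ℂ) (hA : A.IsHermitian)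
    (hB : B.IsHermitian) : ∃ w : Fin d → Fin d → ℝ, (∀ i j, 0 ≤ w i j) ∧ (∀ i, ∑ j, w i j = 1) ∧
      (∀ j, ∑ i, w i j = 1) ∧ ∀ t : ℝ, (A * mpow B t).trace.re =
        ∑ i, ∑ j, w i j * (hA.eigenvalues i * hB.eigenvalues j ^ t) := by
  set W : Matrix.unitaryGroup (Fin d) ℂ := star hA.eigenvectorUnitary * hB.eigenvectorUnitary with hW
  have h1 : (W : Matrix (Fin d) (Fin d) ℂ) * (W : Matrix (Fin d) (Fin d) ℂ)ᴴ = 1 :=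
    Unitary.coe_mul_star_self W
  have h2 : (W : Matrix (Fin d) (Fin d) ℂ)ᴴ * (W : Matrix (Fin d) (Fin d) ℂ) = 1 :=
    Unitary.coe_star_mul_self W
  refine ⟨fun i j => Complex.normSq (W i j), fun i j => Complex.normSq_nonneg _, fun i => ?_,
    fun j => ?_, fun t => ?_⟩
  · have := congrFun (congrFun h1 i) i
    rw [mul_apply, one_apply_eq] at this
    simp only [conjTranspose_apply, RCLike.star_def, Complex.mul_conj] at this
    exact_mod_cast this
  · have := congrFun (congrFun h2 j) j
    rw [mul_apply, one_apply_eq] at this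
    simp only [conjTranspose_apply, RCLike.star_def, mul_comm, Complex.mul_conj] at this
    exact_mod_cast this
  · have h3 : (A * mpow B t).trace = (diagonal (RCLike.ofReal ∘ hA.eigenvalues) *
        ((W : Matrix (Fin d) (Fin d) ℂ) *
          diagonal (RCLike.ofReal ∘ (fun x : ℝ => x ^ t) ∘ hB.eigenvalues) *
          (W : Matrix (Fin d) (Fin d) ℂ)ᴴ)).trace := by
      unfold mpow
      rw [hB.cfc_eq, IsHermitian.cfc, Unitary.conjStarAlgAut_apply]
      conv_lhs => rw [hA.spectral_theorem, Unitary.conjStarAlgAut_apply]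
      rw [hW]
      simp only [Submonoid.coe_mul, Unitary.coe_star, ← star_eq_conjTranspose,
        star_mul, star_star, mul_assoc]
      rw [trace_mul_comm]
      simp only [mul_assoc]
    rw [h3, trace]
    simp only [diag_apply, diagonal_mul, mul_apply (M := _ * diagonal _), mul_diagonal, Complex.re_sum]
    refine Finset.sum_congr rfl fun i _ => ?_
    rw [Finset.mul_sum, Complex.re_sum]
    refine Finset.sum_congr rfl fun j _ => ?_
    simp only [conjTranspose_apply, RCLike.star_def, Function.comp_apply]
    rw [mul_right_comm, Complex.mul_conj]
    simp only [Complex.coe_algebraMap, ← Complex.ofReal_mul, Complex.ofReal_re]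
    ring

lemma aux_point (a b s T : ℝ) (hb : 0 ≤ b) (hs : 0 < s) (hT : 0 < T) :
    b ^ a * s ^ (1 - a) = T ^ a * s * (1 + (b / (T * s) - 1)) ^ a := by
  rw [add_sub_cancel, Real.div_rpow hb (by positivity), Real.mul_rpow hT.le hs.le,
    Real.rpow_sub hs, Real.rpow_one]
  have := Real.rpow_pos_of_pos hT a
  have := Real.rpow_pos_of_pos hs a
  field_simp

lemma aux_sum {d : ℕ} (w : Fin d → Fin d → ℝ) (h1 : ∀ i, ∑ j, w i j = 1)
    (h2 : ∀ j, ∑ i, w i j = 1) (a T : ℝ) (hT : T ≠ 0) (b s : Fin d → ℝ) (hs : ∑ j, s j = 1)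
    (hs0 : ∀ j, 0 < s j) (hb : ∑ i, b i = T) :
    ∑ i, ∑ j, w i j * (T ^ a * s j * (1 + a * (b i / (T * s j) - 1))) = T ^ a := by
  have e : ∀ i j, w i j * (T ^ a * s j * (1 + a * (b i / (T * s j) - 1)))
      = T ^ a * (1 - a) * (w i j * s j) + T ^ a * a / T * (w i j * b i) := by
    intro i j
    have := (hs0 j).ne'
    field_simp
    ring
  simp only [e, Finset.sum_add_distrib, ← Finset.mul_sum]
  rw [Finset.sum_comm]
  simp only [← Finset.sum_mul, h1, h2, one_mul, hs, hb]
  field_simp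
  ring

lemma aux_real {d : ℕ} (w : Fin d → Fin d → ℝ) (h0 : ∀ i j, 0 ≤ w i j) (h1 : ∀ i, ∑ j, w i j = 1)
    (h2 : ∀ j, ∑ i, w i j = 1) (a : ℝ) (ha : a ∈ Set.Ioo (0 : ℝ) 1 ∪ Set.Ioc (1 : ℝ) 2)
    (α s : Fin d → ℝ) (hs : ∑ j, s j = 1) (hs0 : ∀ j, 0 < s j) (hα : ∀ i, 0 ≤ α i) :
    ((∑ i, ∑ j, w i j * (α i * s j ^ (1 - a))) ^ (1 / a) - 1) / (a - 1) ≥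
      ((∑ i, α i ^ (1 / a)) - 1) / (a - 1) := by
  have ha0 : 0 < a := by rcases ha with h | h <;> linarith [h.1]
  have hS : 0 ≤ ∑ i, ∑ j, w i j * (α i * s j ^ (1 - a)) :=
    Finset.sum_nonneg fun i _ => Finset.sum_nonneg fun j _ =>
      mul_nonneg (h0 i j) (mul_nonneg (hα i) (Real.rpow_nonneg (hs0 j).le _))
  have hb : ∀ i, 0 ≤ α i ^ (1 / a) := fun i => Real.rpow_nonneg (hα i) _
  rcases (Finset.sum_nonneg fun i (_ : i ∈ Finset.univ) => hb i).eq_or_lt with hT | hT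
  · have hz : ∀ i, α i = 0 := fun i => by
      have := (Finset.sum_eq_zero_iff_of_nonneg fun i _ => hb i).1 hT.symm i (Finset.mem_univ i)
      exact (Real.rpow_eq_zero (hα i) (by positivity)).1 this
    have : (1 / a) ≠ 0 := by positivity
    simp only [hz, zero_mul, mul_zero, Finset.sum_const_zero, Real.zero_rpow this]
    exact le_rfl
  set T := ∑ i, α i ^ (1 / a) with hTdef
  have hsum := aux_sum w h1 h2 a T hT.ne' (fun i => α i ^ (1 / a)) s hs hs0 rfl
  have hpt : ∀ i j, α i * s j ^ (1 - a) =
      T ^ a * s j * (1 + (α i ^ (1 / a) / (T * s j) - 1)) ^ a := fun i j => by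
    rw [← aux_point a _ _ T (hb i) (hs0 j) hT, ← Real.rpow_mul (hα i), one_div_mul_cancel ha0.ne',
      Real.rpow_one]
  have hm1 : ∀ i j, -1 ≤ α i ^ (1 / a) / (T * s j) - 1 := fun i j => by
    have := div_nonneg (hb i) (mul_nonneg hT.le (hs0 j).le)
    linarith
  have hTa : (T ^ a) ^ (1 / a) = T := by
    rw [← Real.rpow_mul hT.le, mul_one_div_cancel ha0.ne', Real.rpow_one]
  rcases ha with ha | ha
  · apply div_le_div_of_nonpos_of_le (by linarith [ha.2])
    apply sub_le_sub_right
    rw [← hTa]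
    refine Real.rpow_le_rpow hS ?_ (by positivity)
    rw [← hsum]
    refine Finset.sum_le_sum fun i _ => Finset.sum_le_sum fun j _ => ?_
    rw [hpt]
    have := hs0 j
    exact mul_le_mul_of_nonneg_left (mul_le_mul_of_nonneg_left
      (rpow_one_add_le_one_add_mul_self (hm1 i j) ha.1.le ha.2.le) (by positivity)) (h0 i j)
  · apply div_le_div_of_nonneg_right _ (by linarith [ha.1])
    apply sub_le_sub_right
    rw [← hTa]
    refine Real.rpow_le_rpow (by positivity) ?_ (by positivity)
    rw [← hsum]
    refine Finset.sum_le_sum fun i _ => Finset.sum_le_sum fun j _ => ?_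
    rw [hpt]
    have := hs0 j
    exact mul_le_mul_of_nonneg_left (mul_le_mul_of_nonneg_left
      (one_add_mul_self_le_rpow_one_add (hm1 i j) ha.1.le) (by positivity)) (h0 i j)

/-- For a unital idempotent CPTP map `E`, `a ∈ (0,1) ∪ (1,2]` and a positive definite
density matrix `ρ`: every positive definite density matrix `σ` fixed by `E` satisfies
`S̃_a(ρ|σ) ≥ (Tr((E(ρ^a))^(1/a)) - 1)/(a - 1)`. -/
theorem stmt_2 {d : ℕ}
    (E : Matrix (Fin d) (Fin d) ℂ →ₗ[ℂ] Matrix (Fin d) (Fin d) ℂ)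
    (hKraus : ∃ (n : ℕ) (K : Fin n → Matrix (Fin d) (Fin d) ℂ),
      (∀ X, E X = ∑ i, K i * X * (K i)ᴴ) ∧ ∑ i, (K i)ᴴ * K i = 1)
    (hUnital : E 1 = 1)
    (hIdem : ∀ X, E (E X) = E X)
    (a : ℝ) (ha : a ∈ Set.Ioo (0 : ℝ) 1 ∪ Set.Ioc (1 : ℝ) 2)
    (ρ : Matrix (Fin d) (Fin d) ℂ) (hρ : ρ.PosDef) (hρtr : ρ.trace = 1) :
    ∀ σ : Matrix (Fin d) (Fin d) ℂ, σ.PosDef → σ.trace = 1 → E σ = σ →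
      tsallis a ρ σ ≥ (((mpow (E (mpow ρ a)) (1 / a)).trace).re - 1) / (a - 1) := by
  intro σ hσ hσtr hfix
  obtain ⟨n, K, hK, hTP⟩ := hKraus
  have hU : ∑ i, K i * (K i)ᴴ = 1 := by
    have := hK 1
    rw [hUnital] at this
    simpa using this.symm
  have hcomm : ∀ i, Commute (mpow σ (1 - a)) (K i) := fun i =>
    (aux_commute_s2 K hTP hU σ hσ.1 (by rw [← hK, hfix]) i).cfc_real _
  have hA : (E (mpow ρ a)).PosSemidef := by
    rw [hK]
    exact posSemidef_sum _ fun i _ =>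
      (aux_psd ρ hρ.posSemidef a).mul_mul_conjTranspose_same (K i)
  have htr : (mpow ρ a * mpow σ (1 - a)).trace = (E (mpow ρ a) * mpow σ (1 - a)).trace := by
    rw [hK, aux_trace K hTP _ _ hcomm]
  obtain ⟨w, h0, h1, h2, hw⟩ := aux_weights _ σ hA.1 hσ.1
  have hs : ∑ j, hσ.1.eigenvalues j = 1 := by
    have := hσ.1.trace_eq_sum_eigenvalues
    rw [hσtr] at this
    have h := congrArg Complex.re this
    simpa using h.symm
  unfold tsallis
  rw [htr, hw, aux_trpow _ hA.1]
  exact aux_real w h0 h1 h2 a ha _ _ hs (fun j => hσ.eigenvalues_pos j)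
    (fun i => hA.eigenvalues_nonneg i)
end

section
/- Let E be a unital idempotent CPTP map on d×d complex matrices, let a ∈ (0,1)∪(1,2], let ρ be a positive definite density matrix, and let σ be a positive definite density matrix with E(σ) = σ. Then Tr(ρ^a σ^{1−a}) = Tr(E(ρ^a) σ^{1−a}). -/
open Matrix
open scoped ComplexOrder

/-- For a unital idempotent CPTP map `E`, `a ∈ (0,1) ∪ (1,2]`, a positive definite
density matrix `ρ` and a positive definite density matrix `σ` fixed by `E`:
`Tr(ρ^a σ^(1-a)) = Tr(E(ρ^a) σ^(1-a))`. -/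
theorem stmt_3 {d : ℕ}
    (E : Matrix (Fin d) (Fin d) ℂ →ₗ[ℂ] Matrix (Fin d) (Fin d) ℂ)
    (hKraus : ∃ (n : ℕ) (K : Fin n → Matrix (Fin d) (Fin d) ℂ),
      (∀ X, E X = ∑ i, K i * X * (K i)ᴴ) ∧ ∑ i, (K i)ᴴ * K i = 1)
    (hUnital : E 1 = 1)
    (hIdem : ∀ X, E (E X) = E X)
    (a : ℝ) (ha : a ∈ Set.Ioo (0 : ℝ) 1 ∪ Set.Ioc (1 : ℝ) 2)
    (ρ : Matrix (Fin d) (Fin d) ℂ) (hρ : ρ.PosDef) (hρtr : ρ.trace = 1)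
    (σ : Matrix (Fin d) (Fin d) ℂ) (hσ : σ.PosDef) (hσtr : σ.trace = 1)
    (hfix : E σ = σ) :
    (mpow ρ a * mpow σ (1 - a)).trace = (E (mpow ρ a) * mpow σ (1 - a)).trace := by
  obtain ⟨n, K, hE, hTP⟩ := hKraus
  have hs : σᴴ = σ := hσ.1
  have htr : ∀ X, (E X).trace = X.trace := by
    intro X
    rw [hE, trace_sum]
    calc ∑ i, (K i * X * (K i)ᴴ).trace = ∑ i, ((K i)ᴴ * K i * X).trace := by
          refine Finset.sum_congr rfl fun i _ => ?_
          rw [trace_mul_comm, Matrix.mul_assoc]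
      _ = X.trace := by rw [← trace_sum, ← Finset.sum_mul, hTP, Matrix.one_mul]
  have hsum : ∑ i, (K i * σ - σ * K i) * (K i * σ - σ * K i)ᴴ = E (σ * σ) - σ * σ := by
    have h1 : ∀ i, (K i * σ - σ * K i) * (K i * σ - σ * K i)ᴴ
        = K i * (σ * σ) * (K i)ᴴ - (K i * σ * (K i)ᴴ) * σ - σ * (K i * σ * (K i)ᴴ)
          + σ * (K i * 1 * (K i)ᴴ) * σ := by
      intro i
      rw [conjTranspose_sub, conjTranspose_mul, conjTranspose_mul, hs]
      noncomm_ring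
    rw [Finset.sum_congr rfl fun i _ => h1 i, Finset.sum_add_distrib, Finset.sum_sub_distrib,
      Finset.sum_sub_distrib, ← Finset.sum_mul, ← Finset.mul_sum, ← Finset.sum_mul,
      ← Finset.mul_sum, ← hE, ← hE, ← hE, hUnital, hfix]
    noncomm_ring
  have hz : ∑ i, ((K i * σ - σ * K i) * (K i * σ - σ * K i)ᴴ).trace = 0 := by
    rw [← trace_sum, hsum, trace_sub, htr, sub_self]
  rw [Finset.sum_eq_zero_iff_of_nonneg
    (fun i _ => (posSemidef_self_mul_conjTranspose _).trace_nonneg)] at hz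
  have hcomm : ∀ i, Commute σ (K i) := by
    intro i
    have := hz i (Finset.mem_univ i)
    rw [trace_mul_conjTranspose_self_eq_zero_iff, sub_eq_zero] at this
    exact this.symm
  have hcomm2 : ∀ i, mpow σ (1 - a) * K i = K i * mpow σ (1 - a) := by
    intro i
    have h : IsSelfAdjoint σ := hs
    exact (h.commute_cfc (hcomm i) _).eq
  generalize mpow σ (1 - a) = M at *
  generalize mpow ρ a = X at *
  rw [hE, Finset.sum_mul, trace_sum]
  symm
  calc ∑ i, (K i * X * (K i)ᴴ * M).trace = ∑ i, ((K i)ᴴ * K i * (M * X)).trace := by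
        refine Finset.sum_congr rfl fun i _ => ?_
        rw [Matrix.mul_assoc, Matrix.mul_assoc, trace_mul_comm, Matrix.mul_assoc,
          Matrix.mul_assoc, hcomm2, trace_mul_comm]
        simp only [Matrix.mul_assoc]
    _ = (X * M).trace := by
        rw [← trace_sum, ← Finset.sum_mul, hTP, Matrix.one_mul, trace_mul_comm]
end

section
/- Let E be a unital idempotent CPTP map on d×d complex matrices and let σ be a positive definite d×d matrix with E(σ) = σ. Then E(σ^t) = σ^t for every real number t, where σ^t is defined via the functional calculus. In particular, if σ is a fixed point of E then so is every real matrix power of σ. -/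
open Matrix
open scoped ComplexOrder

theorem stmt_5 {d : ℕ}
    (E : Matrix (Fin d) (Fin d) ℂ →ₗ[ℂ] Matrix (Fin d) (Fin d) ℂ)
    (hKraus : ∃ (n : ℕ) (K : Fin n → Matrix (Fin d) (Fin d) ℂ),
      (∀ X, E X = ∑ i, K i * X * (K i)ᴴ) ∧ ∑ i, (K i)ᴴ * K i = 1)
    (hUnital : E 1 = 1)
    (hIdem : ∀ X, E (E X) = E X)
    (σ : Matrix (Fin d) (Fin d) ℂ) (hσ : σ.PosDef) (hfix : E σ = σ) :
    ∀ t : ℝ, E (mpow σ t) = mpow σ t := by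
  intro t
  obtain ⟨n, K, hE, hTP⟩ := hKraus
  have hH : σᴴ = σ := hσ.isHermitian
  have h1 : ∑ i, K i * (K i)ᴴ = 1 := by
    have := hE 1
    rw [hUnital] at this
    simpa using this.symm
  have htr : ∀ X, (E X).trace = X.trace := by
    intro X
    calc (E X).trace = ∑ i, ((K i)ᴴ * K i * X).trace := by
          rw [hE, Matrix.trace_sum]
          refine Finset.sum_congr rfl fun i _ => ?_
          rw [Matrix.trace_mul_comm, ← Matrix.mul_assoc]
      _ = X.trace := by
          rw [← Matrix.trace_sum, ← Finset.sum_mul, hTP, one_mul]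
  have hsum : ∑ i, (K i * σ - σ * K i) * (K i * σ - σ * K i)ᴴ = E (σ * σ) - σ * σ := by
    have e : ∀ i, (K i * σ - σ * K i) * (K i * σ - σ * K i)ᴴ
        = K i * (σ * σ) * (K i)ᴴ - (K i * σ * (K i)ᴴ) * σ - σ * (K i * σ * (K i)ᴴ)
          + σ * (K i * (K i)ᴴ) * σ := by
      intro i
      rw [Matrix.conjTranspose_sub, Matrix.conjTranspose_mul, Matrix.conjTranspose_mul, hH]
      noncomm_ring
    simp_rw [e]
    rw [Finset.sum_add_distrib, Finset.sum_sub_distrib, Finset.sum_sub_distrib,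
      ← Finset.sum_mul, ← Finset.mul_sum, ← Finset.sum_mul, ← Finset.mul_sum, h1, ← hE, ← hE, hfix]
    noncomm_ring
  have hz : ∑ i, ((K i * σ - σ * K i) * (K i * σ - σ * K i)ᴴ).trace = 0 := by
    rw [← Matrix.trace_sum, hsum, Matrix.trace_sub, htr, sub_self]
  have hc : ∀ i, Commute σ (K i) := by
    intro i
    have := (Finset.sum_eq_zero_iff_of_nonneg (fun i _ =>
      (Matrix.posSemidef_self_mul_conjTranspose (K i * σ - σ * K i)).trace_nonneg)).1 hz i
        (Finset.mem_univ i)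
    rw [Matrix.trace_mul_conjTranspose_self_eq_zero_iff] at this
    exact (sub_eq_zero.1 this).symm
  have hc2 : ∀ i, Commute (mpow σ t) (K i) := fun i =>
    (hc i).cfc_real _
  rw [hE]
  simp_rw [← (hc2 _).eq, Matrix.mul_assoc]
  rw [← Finset.mul_sum, h1, mul_one]
end

section
/- Let E be a unital trace-preserving completely positive map on d×d complex matrices and let E† be its adjoint with respect to the Hilbert–Schmidt inner product, i.e. Tr(E†(A)† B) = Tr(A† E(B)) for all d×d matrices A, B. Then the fixed-point sets of E and E† coincide: E(X) = X holds if and only if E†(X) = X. -/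
open Matrix
open scoped ComplexOrder

theorem kraus_fixed_aux {d n : ℕ} (K : Fin n → Matrix (Fin d) (Fin d) ℂ)
    (h1 : ∑ i, (K i)ᴴ * K i = 1) (h2 : ∑ i, K i * (K i)ᴴ = 1)
    (X : Matrix (Fin d) (Fin d) ℂ) (hX : ∑ i, K i * X * (K i)ᴴ = X) :
    ∑ i, (K i)ᴴ * X * K i = X := by
  have hX' : ∑ i, K i * Xᴴ * (K i)ᴴ = Xᴴ := by
    have := congrArg conjTranspose hX
    simpa [conjTranspose_sum, Matrix.mul_assoc] using this
  have e1 : ∑ i, (K i * X * (Xᴴ * (K i)ᴴ)).trace = (X * Xᴴ).trace := by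
    have : ∀ i, (K i * X * (Xᴴ * (K i)ᴴ)).trace = ((K i)ᴴ * K i * (X * Xᴴ)).trace := by
      intro i
      rw [← Matrix.mul_assoc, Matrix.trace_mul_comm]
      simp only [Matrix.mul_assoc]
    simp_rw [this]
    rw [← Matrix.trace_sum, ← Finset.sum_mul, h1, Matrix.one_mul]
  have e2 : ∑ i, (K i * X * ((K i)ᴴ * Xᴴ)).trace = (X * Xᴴ).trace := by
    simp_rw [← Matrix.mul_assoc]
    rw [← Matrix.trace_sum, ← Finset.sum_mul, hX]
  have e3 : ∑ i, (X * K i * (Xᴴ * (K i)ᴴ)).trace = (X * Xᴴ).trace := by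
    simp_rw [Matrix.mul_assoc]
    rw [← Matrix.trace_sum, ← Finset.mul_sum]
    simp_rw [← Matrix.mul_assoc]
    rw [hX']
  have e4 : ∑ i, (X * K i * ((K i)ᴴ * Xᴴ)).trace = (X * Xᴴ).trace := by
    have : ∀ i, X * K i * ((K i)ᴴ * Xᴴ) = X * (K i * (K i)ᴴ) * Xᴴ := by
      intro i
      simp only [Matrix.mul_assoc]
    simp_rw [this]
    rw [← Matrix.trace_sum, ← Finset.sum_mul, ← Finset.mul_sum, h2, Matrix.mul_one]
  have key : ∑ i, ((K i * X - X * K i) * (K i * X - X * K i)ᴴ).trace = 0 := by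
    simp only [conjTranspose_sub, conjTranspose_mul, Matrix.sub_mul, Matrix.mul_sub,
      Matrix.trace_sub, Finset.sum_sub_distrib]
    rw [e1, e2, e3, e4]
    ring
  have hc : ∀ i, K i * X = X * K i := by
    intro i
    have := (Finset.sum_eq_zero_iff_of_nonneg (fun i _ =>
      (Matrix.posSemidef_self_mul_conjTranspose (K i * X - X * K i)).trace_nonneg)).1 key i
        (Finset.mem_univ i)
    exact sub_eq_zero.1 (Matrix.trace_mul_conjTranspose_self_eq_zero_iff.1 this)
  have : ∀ i, (K i)ᴴ * X * K i = (K i)ᴴ * K i * X := by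
    intro i
    rw [Matrix.mul_assoc, ← hc i, Matrix.mul_assoc]
  simp_rw [this]
  rw [← Finset.sum_mul, h1, Matrix.one_mul]

/-- For a unital trace-preserving completely positive map `E` with Hilbert–Schmidt
adjoint `E†` (i.e. `Tr((E†(A))† B) = Tr(A† E(B))` for all `A, B`), the fixed-point
sets of `E` and `E†` coincide. -/
theorem stmt_6 {d : ℕ}
    (E Edag : Matrix (Fin d) (Fin d) ℂ →ₗ[ℂ] Matrix (Fin d) (Fin d) ℂ)
    (hKraus : ∃ (n : ℕ) (K : Fin n → Matrix (Fin d) (Fin d) ℂ),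
      (∀ X, E X = ∑ i, K i * X * (K i)ᴴ) ∧ ∑ i, (K i)ᴴ * K i = 1)
    (hUnital : E 1 = 1)
    (hAdj : ∀ A B : Matrix (Fin d) (Fin d) ℂ,
      ((Edag A)ᴴ * B).trace = (Aᴴ * E B).trace) :
    ∀ X : Matrix (Fin d) (Fin d) ℂ, E X = X ↔ Edag X = X := by
  obtain ⟨n, K, hE, h1⟩ := hKraus
  have h2 : ∑ i, K i * (K i)ᴴ = 1 := by
    have := hE 1
    rw [hUnital] at this
    simpa using this.symm
  have hD : ∀ X, Edag X = ∑ i, (K i)ᴴ * X * K i := by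
    intro X
    have : (Edag X)ᴴ = (∑ i, (K i)ᴴ * X * K i)ᴴ := by
      apply Matrix.ext_iff_trace_mul_right.2
      intro B
      rw [hAdj, hE, conjTranspose_sum, Finset.sum_mul, Finset.mul_sum, Matrix.trace_sum,
        Matrix.trace_sum]
      refine Finset.sum_congr rfl fun i _ => ?_
      rw [← Matrix.mul_assoc, Matrix.trace_mul_comm]
      simp [Matrix.mul_assoc]
    exact conjTranspose_injective this
  intro X
  rw [hE, hD]
  constructor
  · exact kraus_fixed_aux K h1 h2 X
  · intro h
    have := kraus_fixed_aux (fun i => (K i)ᴴ) (by simpa using h2) (by simpa using h1) X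
      (by simpa using h)
    simpa using this
end

section
/- Let a ∈ (0,1)∪(1,2], let ρ be a density matrix and σ a positive definite density matrix on ℂ^d. Then S̃_a(ρ|σ) ≥ 0, with equality if and only if ρ = σ. -/
open Matrix
open scoped ComplexOrder

noncomputable def ovl {d : ℕ} {A B : Matrix (Fin d) (Fin d) ℂ} (hA : A.IsHermitian)
    (hB : B.IsHermitian) : Matrix (Fin d) (Fin d) ℂ :=
  star (hA.eigenvectorUnitary : Matrix (Fin d) (Fin d) ℂ) * hB.eigenvectorUnitary

lemma trace_formula {d : ℕ} {A B : Matrix (Fin d) (Fin d) ℂ} (hA : A.IsHermitian)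
    (hB : B.IsHermitian) (f g : ℝ → ℝ) :
    (cfc f A * cfc g B).trace.re =
      ∑ i, ∑ j, f (hA.eigenvalues i) * g (hB.eigenvalues j) * Complex.normSq (ovl hA hB i j) := by
  set U : Matrix (Fin d) (Fin d) ℂ := hA.eigenvectorUnitary.1 with hU
  set V : Matrix (Fin d) (Fin d) ℂ := hB.eigenvectorUnitary.1 with hV
  have e : (cfc f A * cfc g B).trace =
      (diagonal (fun i => (f (hA.eigenvalues i) : ℂ)) * ovl hA hB *
        (diagonal (fun i => (g (hB.eigenvalues i) : ℂ)) * star (ovl hA hB))).trace := by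
    rw [hA.cfc_eq, hB.cfc_eq, Matrix.IsHermitian.cfc, Matrix.IsHermitian.cfc,
      Unitary.conjStarAlgAut_apply, Unitary.conjStarAlgAut_apply]
    change (U * diagonal (fun i => (f (hA.eigenvalues i) : ℂ)) * star U *
      (V * diagonal (fun i => (g (hB.eigenvalues i) : ℂ)) * star V)).trace = _
    rw [ovl, ← hU, ← hV, star_mul, star_star, mul_assoc, mul_assoc, Matrix.trace_mul_comm]
    simp only [mul_assoc]
  rw [e, Matrix.trace, Complex.re_sum]
  refine Finset.sum_congr rfl fun i _ => ?_
  rw [Matrix.diag_apply, Matrix.mul_apply, Complex.re_sum]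
  refine Finset.sum_congr rfl fun j _ => ?_
  rw [Matrix.diagonal_mul, Matrix.diagonal_mul, Matrix.star_apply]
  have : (f (hA.eigenvalues i) : ℂ) * ovl hA hB i j *
      ((g (hB.eigenvalues j) : ℂ) * star (ovl hA hB i j)) =
      ((f (hA.eigenvalues i) * g (hB.eigenvalues j) * Complex.normSq (ovl hA hB i j) : ℝ) : ℂ) := by
    push_cast
    rw [← Complex.mul_conj]
    simp only [RCLike.star_def]
    ring
  rw [this, Complex.ofReal_re]

lemma scalar_pos {a r s : ℝ} (ha : a ∈ Set.Ioo (0 : ℝ) 1 ∪ Set.Ioc (1 : ℝ) 2) (hr : 0 ≤ r)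
    (hs : 0 < s) (hne : r ≠ s) : 0 < (a - 1) * (r ^ a * s ^ (1 - a) - a * r - (1 - a) * s) := by
  have h1 : (-1 : ℝ) ≤ r / s - 1 := by
    have := div_nonneg hr hs.le
    linarith
  have h2 : r / s - 1 ≠ 0 := by
    rw [sub_ne_zero]
    intro h
    rw [div_eq_one_iff_eq hs.ne'] at h
    exact hne h
  have h3 : r ^ a * s ^ (1 - a) = s * (1 + (r / s - 1)) ^ a := by
    rw [add_sub_cancel, Real.div_rpow hr hs.le, Real.rpow_sub hs, Real.rpow_one]
    have := (Real.rpow_pos_of_pos hs a).ne'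
    field_simp
  have h4 : (a - 1) * (r ^ a * s ^ (1 - a) - a * r - (1 - a) * s) =
      s * ((a - 1) * ((1 + (r / s - 1)) ^ a - (1 + a * (r / s - 1)))) := by
    rw [h3]
    generalize (1 + (r / s - 1)) ^ a = X
    field_simp
    ring
  rw [h4]
  apply mul_pos hs
  rcases ha with ⟨h0, h⟩ | ⟨h, _⟩
  · exact mul_pos_of_neg_of_neg (by linarith)
      (by linarith [rpow_one_add_lt_one_add_mul_self h1 h2 h0 h])
  · exact mul_pos (by linarith) (by linarith [one_add_mul_self_lt_rpow_one_add h1 h2 h])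

lemma scalar_self {a s : ℝ} (hs : 0 < s) : s ^ a * s ^ (1 - a) = s := by
  rw [← Real.rpow_add hs, add_sub_cancel, Real.rpow_one]

/-- For `a ∈ (0,1) ∪ (1,2]`, a density matrix `ρ` and a positive definite density
matrix `σ`: `S̃_a(ρ|σ) ≥ 0`, with equality if and only if `ρ = σ`. -/
theorem stmt_7 {d : ℕ}
    (a : ℝ) (ha : a ∈ Set.Ioo (0 : ℝ) 1 ∪ Set.Ioc (1 : ℝ) 2)
    (ρ : Matrix (Fin d) (Fin d) ℂ) (hρ : ρ.PosSemidef) (hρtr : ρ.trace = 1)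
    (σ : Matrix (Fin d) (Fin d) ℂ) (hσ : σ.PosDef) (hσtr : σ.trace = 1) :
    0 ≤ tsallis a ρ σ ∧ (tsallis a ρ σ = 0 ↔ ρ = σ) := by
  have hA := hρ.isHermitian
  have hB := hσ.isHermitian
  have hr : ∀ i, 0 ≤ hA.eigenvalues i := hρ.eigenvalues_nonneg
  have hs : ∀ i, 0 < hB.eigenvalues i := hσ.eigenvalues_pos
  have ha0 : 0 < a := by
    rcases ha with ⟨h0, _⟩ | ⟨h, _⟩ <;> linarith
  have ha1 : a ≠ 1 := by
    rcases ha with ⟨_, h⟩ | ⟨h, _⟩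
    · exact h.ne
    · exact h.ne'
  have t1 := trace_formula hA hB (fun x => x) (fun _ => 1)
  have t2 := trace_formula hA hB (fun _ => 1) (fun x => x)
  have t3 := trace_formula hA hB (fun x => x ^ a) (fun x => x ^ (1 - a))
  have c1 : cfc (fun x : ℝ => x) ρ = ρ := cfc_id' ℝ ρ hA
  have c2 : cfc (fun x : ℝ => x) σ = σ := cfc_id' ℝ σ hB
  have c3 : cfc (fun _ : ℝ => (1 : ℝ)) ρ = 1 := cfc_const_one ℝ ρ hA
  have c4 : cfc (fun _ : ℝ => (1 : ℝ)) σ = 1 := cfc_const_one ℝ σ hB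
  rw [c1, c4, mul_one, hρtr] at t1
  rw [c2, c3, one_mul, hσtr] at t2
  simp only [Complex.one_re, mul_one, one_mul] at t1 t2
  unfold tsallis mpow
  set Q := (cfc (fun x : ℝ => x ^ a) ρ * cfc (fun x : ℝ => x ^ (1 - a)) σ).trace.re with hQ
  have hQ0 : 0 ≤ Q := by
    rw [t3]
    exact Finset.sum_nonneg fun i _ => Finset.sum_nonneg fun j _ =>
      mul_nonneg (mul_nonneg (Real.rpow_nonneg (hr i) _) (Real.rpow_nonneg (hs j).le _))
        (Complex.normSq_nonneg _)
  have key : (a - 1) * (Q - 1) = ∑ i, ∑ j, ((a - 1) * (hA.eigenvalues i ^ a *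
      hB.eigenvalues j ^ (1 - a) - a * hA.eigenvalues i - (1 - a) * hB.eigenvalues j)) *
        Complex.normSq (ovl hA hB i j) := by
    have e : ∀ X Y Z : ℝ, X = Q → Y = 1 → Z = 1 →
        (a - 1) * (Q - 1) = (a - 1) * X - (a - 1) * a * Y - (a - 1) * (1 - a) * Z := by
      intro X Y Z hX hY hZ
      rw [hX, hY, hZ]
      ring
    rw [e _ _ _ t3.symm t1.symm t2.symm]
    simp only [Finset.mul_sum]
    rw [← Finset.sum_sub_distrib, ← Finset.sum_sub_distrib]
    refine Finset.sum_congr rfl fun i _ => ?_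
    rw [← Finset.sum_sub_distrib, ← Finset.sum_sub_distrib]
    refine Finset.sum_congr rfl fun j _ => ?_
    ring
  have term : ∀ i j, 0 ≤ ((a - 1) * (hA.eigenvalues i ^ a *
      hB.eigenvalues j ^ (1 - a) - a * hA.eigenvalues i - (1 - a) * hB.eigenvalues j)) *
        Complex.normSq (ovl hA hB i j) := by
    intro i j
    apply mul_nonneg _ (Complex.normSq_nonneg _)
    by_cases h : hA.eigenvalues i = hB.eigenvalues j
    · rw [h, scalar_self (hs j)]
      apply le_of_eq
      ring
    · exact (scalar_pos ha (hr i) (hs j) h).le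
  have hnn : 0 ≤ (a - 1) * (Q - 1) := by
    rw [key]
    exact Finset.sum_nonneg fun i _ => Finset.sum_nonneg fun j _ => term i j
  have hinv : 0 < 1 / a := by positivity
  have hQ1 : Q = 1 ↔ ρ = σ := by
    constructor
    · intro h
      rw [h, sub_self, mul_zero] at key
      have hz : ∀ i j, (hA.eigenvalues i : ℂ) * ovl hA hB i j =
          ovl hA hB i j * (hB.eigenvalues j : ℂ) := by
        intro i j
        have z1 := (Finset.sum_eq_zero_iff_of_nonneg (fun i _ =>
          Finset.sum_nonneg fun j _ => term i j)).1 key.symm i (Finset.mem_univ i)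
        have z2 := (Finset.sum_eq_zero_iff_of_nonneg (fun j _ => term i j)).1 z1 j
          (Finset.mem_univ j)
        by_cases h : hA.eigenvalues i = hB.eigenvalues j
        · rw [h, mul_comm]
        · rcases mul_eq_zero.1 z2 with z | z
          · exact absurd z (scalar_pos ha (hr i) (hs j) h).ne'
          · rw [Complex.normSq_eq_zero.1 z]
            simp
      have hW : diagonal (fun i => (hA.eigenvalues i : ℂ)) * ovl hA hB =
          ovl hA hB * diagonal (fun i => (hB.eigenvalues i : ℂ)) := by
        ext i j
        rw [Matrix.diagonal_mul, Matrix.mul_diagonal]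
        exact hz i j
      have sA := hA.spectral_theorem
      have sB := hB.spectral_theorem
      rw [Unitary.conjStarAlgAut_apply] at sA sB
      set U : Matrix (Fin d) (Fin d) ℂ := hA.eigenvectorUnitary.1 with hU
      set V : Matrix (Fin d) (Fin d) ℂ := hB.eigenvectorUnitary.1 with hV
      change ρ = U * diagonal (fun i => (hA.eigenvalues i : ℂ)) * star U at sA
      change σ = V * diagonal (fun i => (hB.eigenvalues i : ℂ)) * star V at sB
      have uU : U * star U = 1 := Unitary.coe_mul_star_self hA.eigenvectorUnitary
      have uV : V * star V = 1 := Unitary.coe_mul_star_self hB.eigenvectorUnitary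
      rw [ovl, ← hU, ← hV] at hW
      calc ρ = ρ * (V * star V) := by rw [uV, mul_one]
        _ = U * (diagonal (fun i => (hA.eigenvalues i : ℂ)) * (star U * V)) * star V := by
          conv_lhs => rw [sA]
          simp only [mul_assoc]
        _ = (U * star U) * (V * diagonal (fun i => (hB.eigenvalues i : ℂ)) * star V) := by
          rw [hW]
          simp only [mul_assoc]
        _ = σ := by rw [uU, one_mul, ← sB]
    · intro h
      subst h
      have hW : ovl hA hB = 1 := Unitary.coe_star_mul_self hA.eigenvectorUnitary
      refine t3.trans (Eq.trans ?_ t1.symm)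
      refine Finset.sum_congr rfl fun i _ => Finset.sum_congr rfl fun j _ => ?_
      by_cases hij : i = j
      · subst hij
        have := scalar_self (a := a) (hs i)
        exact congrArg (· * Complex.normSq (ovl hA hB i i)) this
      · rw [hW, Matrix.one_apply_ne hij]
        simp
  have hP1 : Q ^ (1 / a) = 1 ↔ Q = 1 := by
    have := Real.rpow_left_inj hQ0 zero_le_one hinv.ne'
    rwa [Real.one_rpow] at this
  constructor
  · rcases ha with ⟨_, h⟩ | ⟨h, _⟩
    · have : Q ≤ 1 := by nlinarith
      have := Real.rpow_le_one hQ0 this hinv.le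
      exact div_nonneg_of_nonpos (by linarith) (by linarith)
    · have : 1 ≤ Q := by nlinarith
      have := Real.one_le_rpow this hinv.le
      exact div_nonneg (by linarith) (by linarith)
  · rw [div_eq_zero_iff, or_iff_left (sub_ne_zero.2 ha1), sub_eq_zero, hP1, hQ1]
end

section
/- Let E be a CPTP map on d×d complex matrices. For a ∈ (0,1], the function A ↦ Tr((E(A^a))^{1/a}) is concave on the set of positive definite d×d matrices, and for a ∈ [1,2] it is convex on the set of positive definite d×d matrices. -/
open Matrix
open scoped ComplexOrder

section Aux
variable {d : ℕ} {A B : Matrix (Fin d) (Fin d) ℂ}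

/-- The matrix `X` in the eigenbases of `A` (rows) and `B` (columns). -/
noncomputable def rot (hA : A.IsHermitian) (hB : B.IsHermitian)
    (X : Matrix (Fin d) (Fin d) ℂ) : Matrix (Fin d) (Fin d) ℂ :=
  star (hA.eigenvectorUnitary : Matrix (Fin d) (Fin d) ℂ) * X *
    (hB.eigenvectorUnitary : Matrix (Fin d) (Fin d) ℂ)

lemma rot_surj (hA : A.IsHermitian) (hB : B.IsHermitian) (Y : Matrix (Fin d) (Fin d) ℂ) :
    ∃ X, rot hA hB X = Y := by
  refine ⟨(hA.eigenvectorUnitary : Matrix (Fin d) (Fin d) ℂ) * Y *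
    star (hB.eigenvectorUnitary : Matrix (Fin d) (Fin d) ℂ), ?_⟩
  have h1 : star (hA.eigenvectorUnitary : Matrix (Fin d) (Fin d) ℂ) *
    (hA.eigenvectorUnitary : Matrix (Fin d) (Fin d) ℂ) = 1 := by simp
  have h2 : star (hB.eigenvectorUnitary : Matrix (Fin d) (Fin d) ℂ) *
    (hB.eigenvectorUnitary : Matrix (Fin d) (Fin d) ℂ) = 1 := by simp
  unfold rot
  calc _ = (star (hA.eigenvectorUnitary : Matrix (Fin d) (Fin d) ℂ) *
    (hA.eigenvectorUnitary : Matrix (Fin d) (Fin d) ℂ)) * Y *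
      (star (hB.eigenvectorUnitary : Matrix (Fin d) (Fin d) ℂ) *
    (hB.eigenvectorUnitary : Matrix (Fin d) (Fin d) ℂ)) := by simp only [mul_assoc]
    _ = Y := by rw [h1, h2, one_mul, mul_one]

lemma trace_polar (hA : A.IsHermitian) (hB : B.IsHermitian) (f g : ℝ → ℝ)
    (X K : Matrix (Fin d) (Fin d) ℂ) :
    (Xᴴ * cfc f A * K * cfc g B).trace =
      ∑ j, ∑ i, star (rot hA hB X i j) * rot hA hB K i j *
        (f (hA.eigenvalues i) : ℂ) * (g (hB.eigenvalues j) : ℂ) := by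
  rw [hA.cfc_eq, hB.cfc_eq, IsHermitian.cfc, IsHermitian.cfc, Unitary.conjStarAlgAut_apply,
    Unitary.conjStarAlgAut_apply]
  have : (Xᴴ * ((hA.eigenvectorUnitary : Matrix (Fin d) (Fin d) ℂ) *
      diagonal (RCLike.ofReal ∘ f ∘ hA.eigenvalues) *
      star (hA.eigenvectorUnitary : Matrix (Fin d) (Fin d) ℂ)) * K *
      ((hB.eigenvectorUnitary : Matrix (Fin d) (Fin d) ℂ) *
      diagonal (RCLike.ofReal ∘ g ∘ hB.eigenvalues) *
      star (hB.eigenvectorUnitary : Matrix (Fin d) (Fin d) ℂ))).trace =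
      ((rot hA hB X)ᴴ * (diagonal (RCLike.ofReal ∘ f ∘ hA.eigenvalues) * rot hA hB K *
        diagonal (RCLike.ofReal ∘ g ∘ hB.eigenvalues))).trace := by
    rw [← mul_assoc, trace_mul_comm]
    simp only [rot, conjTranspose_mul, star_eq_conjTranspose, conjTranspose_conjTranspose,
      mul_assoc]
  rw [this]
  simp only [trace, diag_apply]
  refine Finset.sum_congr rfl fun j _ => ?_
  rw [mul_apply]
  refine Finset.sum_congr rfl fun i _ => ?_
  rw [mul_diagonal, diagonal_mul, conjTranspose_apply]
  simp only [Function.comp_apply, Complex.coe_algebraMap]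
  simp
  ring

/-- Double spectral sum. -/
noncomputable def dsum (hA : A.IsHermitian) (hB : B.IsHermitian)
    (K : Matrix (Fin d) (Fin d) ℂ) (F : ℝ → ℝ → ℝ) : ℝ :=
  ∑ j, ∑ i, Complex.normSq (rot hA hB K i j) * F (hA.eigenvalues i) (hB.eigenvalues j)

lemma trace_dsum (hA : A.IsHermitian) (hB : B.IsHermitian) (f g : ℝ → ℝ)
    (K : Matrix (Fin d) (Fin d) ℂ) :
    (Kᴴ * cfc f A * K * cfc g B).trace.re = dsum hA hB K (fun x y => f x * g y) := by
  rw [trace_polar hA hB, Complex.re_sum, dsum]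
  refine Finset.sum_congr rfl fun j _ => ?_
  rw [Complex.re_sum]
  refine Finset.sum_congr rfl fun i _ => ?_
  have : star (rot hA hB K i j) * rot hA hB K i j = (Complex.normSq (rot hA hB K i j) : ℂ) := by
    rw [Complex.normSq_eq_conj_mul_self]; rfl
  rw [this, ← Complex.ofReal_mul, ← Complex.ofReal_mul, Complex.ofReal_re, mul_assoc]

lemma dsum_le (hA : A.IsHermitian) (hB : B.IsHermitian)
    (K : Matrix (Fin d) (Fin d) ℂ) {F G : ℝ → ℝ → ℝ}
    (h : ∀ i j, F (hA.eigenvalues i) (hB.eigenvalues j) ≤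
      G (hA.eigenvalues i) (hB.eigenvalues j)) : dsum hA hB K F ≤ dsum hA hB K G :=
  Finset.sum_le_sum fun j _ => Finset.sum_le_sum fun i _ =>
    mul_le_mul_of_nonneg_left (h i j) (Complex.normSq_nonneg _)

lemma dsum_congr (hA : A.IsHermitian) (hB : B.IsHermitian)
    (K : Matrix (Fin d) (Fin d) ℂ) {F G : ℝ → ℝ → ℝ}
    (h : ∀ i j, F (hA.eigenvalues i) (hB.eigenvalues j) =
      G (hA.eigenvalues i) (hB.eigenvalues j)) : dsum hA hB K F = dsum hA hB K G :=
  le_antisymm (dsum_le _ _ _ fun i j => (h i j).le) (dsum_le _ _ _ fun i j => (h i j).ge)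

lemma dsum_add (hA : A.IsHermitian) (hB : B.IsHermitian)
    (K : Matrix (Fin d) (Fin d) ℂ) (F G : ℝ → ℝ → ℝ) :
    dsum hA hB K (fun x y => F x y + G x y) = dsum hA hB K F + dsum hA hB K G := by
  simp only [dsum, mul_add, Finset.sum_add_distrib]

lemma dsum_smul (hA : A.IsHermitian) (hB : B.IsHermitian)
    (K : Matrix (Fin d) (Fin d) ℂ) (c : ℝ) (F : ℝ → ℝ → ℝ) :
    dsum hA hB K (fun x y => c * F x y) = c * dsum hA hB K F := by
  simp only [dsum, Finset.mul_sum]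
  refine Finset.sum_congr rfl fun j _ => Finset.sum_congr rfl fun i _ => by ring

lemma dsum_integral (hA : A.IsHermitian) (hB : B.IsHermitian)
    (K : Matrix (Fin d) (Fin d) ℂ) (μ : MeasureTheory.Measure ℝ) (F : ℝ → ℝ → ℝ → ℝ)
    (h : ∀ i j, MeasureTheory.Integrable
      (fun s => F s (hA.eigenvalues i) (hB.eigenvalues j)) μ) :
    MeasureTheory.Integrable (fun s => dsum hA hB K (F s)) μ ∧
    ∫ s, dsum hA hB K (F s) ∂μ = dsum hA hB K (fun x y => ∫ s, F s x y ∂μ) := by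
  constructor
  · exact MeasureTheory.integrable_finsetSum _ fun j _ =>
      MeasureTheory.integrable_finsetSum _ fun i _ => (h i j).const_mul _
  · simp only [dsum]
    rw [MeasureTheory.integral_finsetSum]
    · refine Finset.sum_congr rfl fun j _ => ?_
      rw [MeasureTheory.integral_finsetSum]
      · refine Finset.sum_congr rfl fun i _ => ?_
        rw [MeasureTheory.integral_const_mul]
      · exact fun i _ => (h i j).const_mul _
    · exact fun j _ => MeasureTheory.integrable_finsetSum _ fun i _ => (h i j).const_mul _

/-- The affine-in-`(A,B)` functional whose supremum over `X` is the quadratic-over-linear sum. -/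
noncomputable def phi (α β : ℝ) (K X A B : Matrix (Fin d) (Fin d) ℂ) : ℝ :=
  2 * (Xᴴ * A * K).trace.re - α * (Xᴴ * A * X).trace.re - β * (Xᴴ * X * B).trace.re

lemma phi_affine (α β t s : ℝ) (K X A B A' B' : Matrix (Fin d) (Fin d) ℂ) :
    phi α β K X ((t : ℂ) • A + (s : ℂ) • A') ((t : ℂ) • B + (s : ℂ) • B') =
      t * phi α β K X A B + s * phi α β K X A' B' := by
  simp [phi, mul_add, add_mul, trace_add, trace_smul]
  ring

lemma phi_eq (α β : ℝ) (K X : Matrix (Fin d) (Fin d) ℂ) (hA : A.IsHermitian)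
    (hB : B.IsHermitian) :
    phi α β K X A B = ∑ j, ∑ i,
      (2 * hA.eigenvalues i * (star (rot hA hB X i j) * rot hA hB K i j).re
        - (α * hA.eigenvalues i + β * hB.eigenvalues j) * Complex.normSq (rot hA hB X i j)) := by
  have e1 : Xᴴ * A * K = Xᴴ * cfc (fun x : ℝ => x) A * K * cfc (fun _ : ℝ => (1:ℝ)) B := by
    rw [cfc_id' ℝ A hA.isSelfAdjoint, cfc_const_one ℝ B hB.isSelfAdjoint, mul_one]
  have e2 : Xᴴ * A * X = Xᴴ * cfc (fun x : ℝ => x) A * X * cfc (fun _ : ℝ => (1:ℝ)) B := by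
    rw [cfc_id' ℝ A hA.isSelfAdjoint, cfc_const_one ℝ B hB.isSelfAdjoint, mul_one]
  have e3 : Xᴴ * X * B = Xᴴ * cfc (fun _ : ℝ => (1:ℝ)) A * X * cfc (fun x : ℝ => x) B := by
    rw [cfc_id' ℝ B hB.isSelfAdjoint, cfc_const_one ℝ A hA.isSelfAdjoint, mul_one]
  rw [phi, e1, e2, e3, trace_dsum hA hB, trace_dsum hA hB, trace_polar hA hB, Complex.re_sum,
    dsum, dsum, Finset.mul_sum, Finset.mul_sum, Finset.mul_sum, ← Finset.sum_sub_distrib,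
    ← Finset.sum_sub_distrib]
  refine Finset.sum_congr rfl fun j _ => ?_
  rw [Complex.re_sum, Finset.mul_sum, Finset.mul_sum, Finset.mul_sum, ← Finset.sum_sub_distrib,
    ← Finset.sum_sub_distrib]
  refine Finset.sum_congr rfl fun i _ => ?_
  rw [Complex.ofReal_one, mul_one, Complex.re_mul_ofReal]
  ring

lemma phi_le (α β : ℝ) (K X : Matrix (Fin d) (Fin d) ℂ) (hA : A.IsHermitian)
    (hB : B.IsHermitian)
    (hpos : ∀ i j, 0 < α * hA.eigenvalues i + β * hB.eigenvalues j) :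
    phi α β K X A B ≤ dsum hA hB K (fun x y => x ^ 2 / (α * x + β * y)) := by
  rw [phi_eq α β K X hA hB, dsum]
  refine Finset.sum_le_sum fun j _ => Finset.sum_le_sum fun i _ => ?_
  have h := hpos i j
  generalize α * hA.eigenvalues i + β * hB.eigenvalues j = c at *
  rw [mul_div_assoc', le_div_iff₀ h]
  generalize rot hA hB X i j = x
  generalize rot hA hB K i j = k
  generalize hA.eigenvalues i = l
  simp only [Complex.normSq_apply, Complex.mul_re, Complex.star_def, Complex.conj_re,
    Complex.conj_im]
  nlinarith [sq_nonneg (l * k.re - c * x.re), sq_nonneg (l * k.im - c * x.im)]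

lemma phi_attained (α β : ℝ) (K : Matrix (Fin d) (Fin d) ℂ) (hA : A.IsHermitian)
    (hB : B.IsHermitian)
    (hpos : ∀ i j, 0 < α * hA.eigenvalues i + β * hB.eigenvalues j) :
    ∃ X, phi α β K X A B = dsum hA hB K (fun x y => x ^ 2 / (α * x + β * y)) := by
  obtain ⟨X, hX⟩ := rot_surj hA hB (fun i j =>
    ((hA.eigenvalues i / (α * hA.eigenvalues i + β * hB.eigenvalues j) : ℝ) : ℂ)
      * rot hA hB K i j)
  refine ⟨X, ?_⟩
  rw [phi_eq α β K X hA hB, dsum]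
  refine Finset.sum_congr rfl fun j _ => Finset.sum_congr rfl fun i _ => ?_
  rw [hX]
  beta_reduce
  have h := (hpos i j).ne'
  generalize α * hA.eigenvalues i + β * hB.eigenvalues j = c at *
  generalize rot hA hB K i j = k
  generalize hA.eigenvalues i = l
  simp only [Complex.normSq_apply, Complex.mul_re, Complex.mul_im, Complex.star_def,
    Complex.conj_re, Complex.conj_im, Complex.ofReal_re, Complex.ofReal_im]
  field_simp
  ring

lemma quad_convex {A' B' C D : Matrix (Fin d) (Fin d) ℂ} (α β t s : ℝ) (ht : 0 ≤ t) (hs : 0 ≤ s)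
    (K : Matrix (Fin d) (Fin d) ℂ)
    (hA : A.IsHermitian) (hB : B.IsHermitian) (hA' : A'.IsHermitian) (hB' : B'.IsHermitian)
    (hC : C.IsHermitian) (hD : D.IsHermitian)
    (eC : C = (t : ℂ) • A + (s : ℂ) • A') (eD : D = (t : ℂ) • B + (s : ℂ) • B')
    (hpos : ∀ i j, 0 < α * hA.eigenvalues i + β * hB.eigenvalues j)
    (hpos' : ∀ i j, 0 < α * hA'.eigenvalues i + β * hB'.eigenvalues j)
    (hposC : ∀ i j, 0 < α * hC.eigenvalues i + β * hD.eigenvalues j) :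
    dsum hC hD K (fun x y => x ^ 2 / (α * x + β * y)) ≤
      t * dsum hA hB K (fun x y => x ^ 2 / (α * x + β * y)) +
      s * dsum hA' hB' K (fun x y => x ^ 2 / (α * x + β * y)) := by
  obtain ⟨X, hX⟩ := phi_attained α β K hC hD hposC
  rw [← hX, eC, eD, phi_affine]
  exact add_le_add (mul_le_mul_of_nonneg_left (phi_le α β K X hA hB hpos) ht)
    (mul_le_mul_of_nonneg_left (phi_le α β K X hA' hB' hpos') hs)

lemma cfc_posDef_s9 (hA : A.IsHermitian) {f : ℝ → ℝ} (hf : ∀ i, 0 < f (hA.eigenvalues i)) :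
    (cfc f A).PosDef := by
  rw [hA.cfc_eq, IsHermitian.cfc, Unitary.conjStarAlgAut_apply,
    Matrix.IsUnit.posDef_star_right_conjugate_iff Unitary.isUnit_coe, posDef_diagonal_iff]
  intro i
  simpa using hf i

lemma cfc_posSemidef (hA : A.IsHermitian) {f : ℝ → ℝ} (hf : ∀ i, 0 ≤ f (hA.eigenvalues i)) :
    (cfc f A).PosSemidef := by
  rw [hA.cfc_eq, IsHermitian.cfc, Unitary.conjStarAlgAut_apply,
    Matrix.IsUnit.posSemidef_star_right_conjugate_iff Unitary.isUnit_coe, posSemidef_diagonal_iff]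
  intro i
  simpa using hf i

lemma trace_cfc (hA : A.IsHermitian) (f : ℝ → ℝ) :
    (cfc f A).trace.re = ∑ i, f (hA.eigenvalues i) := by
  rw [hA.cfc_eq, IsHermitian.cfc, Unitary.conjStarAlgAut_apply, trace_mul_comm, ← mul_assoc]
  simp [trace_diagonal]

lemma cfc_congr_eig (hA : A.IsHermitian) {f g : ℝ → ℝ}
    (h : ∀ i, f (hA.eigenvalues i) = g (hA.eigenvalues i)) : cfc f A = cfc g A := by
  apply cfc_congr
  intro x hx
  rw [hA.spectrum_real_eq_range_eigenvalues] at hx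
  obtain ⟨i, rfl⟩ := hx
  exact h i

lemma self_mul_cfc_cfc (hA : A.IsHermitian) (f g : ℝ → ℝ) :
    A * cfc g (cfc f A) = cfc (fun x => x * g (f x)) A := by
  have hfin := finite_real_spectrum (A := A)
  rw [cfc_mul (fun x => x) (fun x => g (f x)) A (hfin.continuousOn _) (hfin.continuousOn _),
    cfc_id' ℝ A hA.isSelfAdjoint,
    cfc_comp' g f A ((hfin.image f).continuousOn _) (hfin.continuousOn _) hA.isSelfAdjoint]

lemma trace_left (hA : A.IsHermitian) (hB : B.IsHermitian) (f : ℝ → ℝ) :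
    (cfc f A).trace.re = dsum hA hB 1 (fun x _ => f x) := by
  have := trace_dsum hA hB f (fun _ => 1) 1
  rw [cfc_const_one ℝ B hB.isSelfAdjoint] at this
  simpa using this

lemma trace_right (hA : A.IsHermitian) (hB : B.IsHermitian) (f : ℝ → ℝ) :
    (cfc f B).trace.re = dsum hA hB 1 (fun _ y => f y) := by
  have := trace_dsum hA hB (fun _ => 1) f 1
  rw [cfc_const_one ℝ A hA.isSelfAdjoint] at this
  simpa using this

lemma trace_mul_cfc (hA : A.IsHermitian) (hB : B.IsHermitian) (f : ℝ → ℝ) :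
    (A * cfc f B).trace.re = dsum hA hB 1 (fun x y => x * f y) := by
  have := trace_dsum hA hB (fun x => x) f 1
  rw [cfc_id' ℝ A hA.isSelfAdjoint] at this
  simpa using this

lemma trace_right_id (hA : A.IsHermitian) (hB : B.IsHermitian) :
    B.trace.re = dsum hA hB 1 (fun _ y => y) := by
  rw [← trace_right hA hB, cfc_id' ℝ B hB.isSelfAdjoint]

lemma dsum_fst (hA : A.IsHermitian) (hB : B.IsHermitian) (K : Matrix (Fin d) (Fin d) ℂ) :
    dsum hA hB K (fun x _ => x) = (Kᴴ * A * K).trace.re := by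
  have := trace_dsum hA hB (fun x => x) (fun _ => 1) K
  rw [cfc_id' ℝ A hA.isSelfAdjoint, cfc_const_one ℝ B hB.isSelfAdjoint, mul_one] at this
  simpa using this.symm

lemma young_upper (hA : A.PosSemidef) (hB : B.PosSemidef) {a : ℝ} (ha0 : 0 < a) (ha1 : a < 1) :
    (A * mpow B (1 - a)).trace.re ≤ a * (mpow A (1 / a)).trace.re + (1 - a) * B.trace.re := by
  rw [mpow, mpow, trace_mul_cfc hA.1 hB.1, trace_left hA.1 hB.1, trace_right_id hA.1 hB.1,
    ← dsum_smul, ← dsum_smul, ← dsum_add]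
  apply dsum_le
  intro i j
  have hx := hA.eigenvalues_nonneg i
  have hy := hB.eigenvalues_nonneg j
  have := Real.geom_mean_le_arith_mean2_weighted ha0.le (sub_nonneg.2 ha1.le)
    (Real.rpow_nonneg hx (1 / a)) hy (by ring)
  rwa [← Real.rpow_mul hx, one_div_mul_cancel ha0.ne', Real.rpow_one] at this

lemma young_lower (hA : A.PosSemidef) (hB : B.PosDef) {a : ℝ} (ha1 : 1 < a) :
    a * (mpow A (1 / a)).trace.re ≤ (A * mpow B (1 - a)).trace.re + (a - 1) * B.trace.re := by
  have ha0 : 0 < a := by linarith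
  rw [mpow, mpow, trace_mul_cfc hA.1 hB.1, trace_left hA.1 hB.1, trace_right_id hA.1 hB.1,
    ← dsum_smul, ← dsum_smul, ← dsum_add]
  apply dsum_le
  intro i j
  have hx := hA.eigenvalues_nonneg i
  have hy := hB.eigenvalues_pos j
  generalize hA.1.eigenvalues i = x at *
  generalize hB.1.eigenvalues j = y at *
  have h1 : 1 / a + (1 - 1 / a) = 1 := by ring
  have h2 : 0 ≤ 1 - 1 / a := by
    rw [sub_nonneg, div_le_one ha0]; exact ha1.le
  have := Real.geom_mean_le_arith_mean2_weighted (by positivity) h2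
    (mul_nonneg hx (Real.rpow_nonneg hy.le (1 - a))) hy.le h1
  rw [Real.mul_rpow hx (Real.rpow_nonneg hy.le _), ← Real.rpow_mul hy.le, mul_assoc,
    ← Real.rpow_add hy] at this
  have e : (1 - a) * (1 / a) + (1 - 1 / a) = 0 := by field_simp; ring
  rw [e, Real.rpow_zero, mul_one] at this
  have := mul_le_mul_of_nonneg_left this ha0.le
  calc _ ≤ _ := this
    _ = _ := by field_simp

lemma young_upper_eq (hA : A.PosSemidef) {a : ℝ} (ha0 : 0 < a) :
    (A * mpow (mpow A (1 / a)) (1 - a)).trace.re = (mpow A (1 / a)).trace.re := by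
  rw [mpow, mpow, self_mul_cfc_cfc hA.1]
  congr 2
  apply cfc_congr_eig hA.1
  intro i
  have hx := hA.eigenvalues_nonneg i
  generalize hA.1.eigenvalues i = x at *
  rw [← Real.rpow_mul hx]
  rcases hx.eq_or_lt with rfl | hx
  · rw [zero_mul, Real.zero_rpow (by positivity)]
  · nth_rw 1 [← Real.rpow_one x]
    rw [← Real.rpow_add hx]
    congr 1
    field_simp
    ring

lemma young_lower_eps (hA : A.PosSemidef) {a ε : ℝ} (ha1 : 1 < a) (hε : 0 < ε) :
    (A * mpow (cfc (fun x : ℝ => (x + ε) ^ (1 / a)) A) (1 - a)).trace.re +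
      (a - 1) * (cfc (fun x : ℝ => (x + ε) ^ (1 / a)) A).trace.re ≤
    a * ∑ i, (hA.1.eigenvalues i + ε) ^ (1 / a) := by
  rw [mpow, self_mul_cfc_cfc hA.1, trace_cfc hA.1, trace_cfc hA.1]
  have : ∑ i, hA.1.eigenvalues i * ((hA.1.eigenvalues i + ε) ^ (1 / a)) ^ (1 - a) ≤
      ∑ i, (hA.1.eigenvalues i + ε) ^ (1 / a) := by
    refine Finset.sum_le_sum fun i _ => ?_
    have hx := hA.eigenvalues_nonneg i
    generalize hA.1.eigenvalues i = x at *
    have hp : 0 < x + ε := by linarith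
    have e : (x + ε) ^ (1 / a) = (x + ε) * ((x + ε) ^ (1 / a)) ^ (1 - a) := by
      rw [← Real.rpow_mul hp.le]
      nth_rw 2 [← Real.rpow_one (x + ε)]
      rw [← Real.rpow_add hp]
      congr 1
      field_simp
      ring
    nth_rw 2 [e]
    exact mul_le_mul_of_nonneg_right (by linarith) (by positivity)
  linarith

open MeasureTheory Real in
lemma lieb_concave {A' B' C D : Matrix (Fin d) (Fin d) ℂ} {a t s : ℝ} (ha0 : 0 < a) (ha1 : a < 1)
    (ht : 0 ≤ t) (hs : 0 ≤ s) (K : Matrix (Fin d) (Fin d) ℂ)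
    (hA : A.PosDef) (hB : B.PosSemidef) (hA' : A'.PosDef) (hB' : B'.PosSemidef)
    (hC : C.PosDef) (hD : D.PosSemidef)
    (eC : C = (t : ℂ) • A + (s : ℂ) • A') (eD : D = (t : ℂ) • B + (s : ℂ) • B') :
    t * (Kᴴ * mpow A a * K * mpow B (1 - a)).trace.re +
      s * (Kᴴ * mpow A' a * K * mpow B' (1 - a)).trace.re ≤
      (Kᴴ * mpow C a * K * mpow D (1 - a)).trace.re := by
  obtain ⟨μ, hμ⟩ := exists_measure_rpow_eq_integral_rpowIntegrand₀₁ (p := 1 - a)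
    ⟨by linarith, by linarith⟩
  have key : ∀ {P Q : Matrix (Fin d) (Fin d) ℂ} (hP : P.PosDef) (hQ : Q.PosSemidef),
      Integrable (fun u => dsum hP.1 hQ.1 K
        (fun x y => x * rpowIntegrand₀₁ (1 - a) u (y / x))) (μ.restrict (Set.Ioi 0)) ∧
      (Kᴴ * mpow P a * K * mpow Q (1 - a)).trace.re =
      ∫ u in Set.Ioi 0, dsum hP.1 hQ.1 K
        (fun x y => x * rpowIntegrand₀₁ (1 - a) u (y / x)) ∂μ := by
    intro P Q hP hQ
    have hpos : ∀ i j, 0 ≤ hQ.1.eigenvalues j / hP.1.eigenvalues i := fun i j =>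
      div_nonneg (hQ.eigenvalues_nonneg j) (hP.eigenvalues_pos i).le
    have h := dsum_integral hP.1 hQ.1 K (μ.restrict (Set.Ioi 0))
      (fun u x y => x * rpowIntegrand₀₁ (1 - a) u (y / x))
      (fun i j => (hμ _ (hpos i j)).1.const_mul _)
    refine ⟨h.1, ?_⟩
    rw [h.2, mpow, mpow, trace_dsum hP.1 hQ.1]
    apply dsum_congr
    intro i j
    rw [integral_const_mul, ← (hμ _ (hpos i j)).2]
    have hx := hP.eigenvalues_pos i
    have hy := hQ.eigenvalues_nonneg j
    generalize hP.1.eigenvalues i = x at *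
    generalize hQ.1.eigenvalues j = y at *
    rw [Real.div_rpow hy hx.le, Real.rpow_sub hx, Real.rpow_one]
    have := (Real.rpow_pos_of_pos hx a).ne'
    field_simp
  rw [(key hA hB).2, (key hA' hB').2, (key hC hD).2, ← integral_const_mul, ← integral_const_mul,
    ← integral_add ((key hA hB).1.const_mul _) ((key hA' hB').1.const_mul _)]
  refine setIntegral_mono_on (((key hA hB).1.const_mul _).add ((key hA' hB').1.const_mul _))
    (key hC hD).1 measurableSet_Ioi fun u hu => ?_
  have hu : 0 < u := hu
  have hpos : ∀ {P Q : Matrix (Fin d) (Fin d) ℂ} (hP : P.PosDef) (hQ : Q.PosSemidef) (i j),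
      0 < u * hP.1.eigenvalues i + 1 * hQ.1.eigenvalues j := by
    intro P Q hP hQ i j
    have hx := hP.eigenvalues_pos i
    have hy := hQ.eigenvalues_nonneg j
    positivity
  have expand : ∀ {P Q : Matrix (Fin d) (Fin d) ℂ} (hP : P.PosDef) (hQ : Q.PosSemidef),
      dsum hP.1 hQ.1 K (fun x y => x * rpowIntegrand₀₁ (1 - a) u (y / x)) =
      (u ^ (1 - a) * u⁻¹) * (Kᴴ * P * K).trace.re +
      (- u ^ (1 - a)) * dsum hP.1 hQ.1 K (fun x y => x ^ 2 / (u * x + 1 * y)) := by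
    intro P Q hP hQ
    rw [← dsum_fst hP.1 hQ.1, ← dsum_smul, ← dsum_smul, ← dsum_add]
    apply dsum_congr
    intro i j
    have h := hpos hP hQ i j
    have hx := hP.eigenvalues_pos i
    generalize hP.1.eigenvalues i = x at *
    generalize hQ.1.eigenvalues j = y at *
    have h2 : u + y / x = (u * x + 1 * y) / x := by field_simp
    rw [rpowIntegrand₀₁, h2, inv_div]
    have := h.ne'
    generalize u * x + 1 * y = c at *
    field_simp
    ring
  rw [expand hA hB, expand hA' hB', expand hC hD]
  have lin : (Kᴴ * C * K).trace.re = t * (Kᴴ * A * K).trace.re + s * (Kᴴ * A' * K).trace.re := by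
    rw [eC]; simp [mul_add, add_mul, trace_add, trace_smul]
  have hq := quad_convex u 1 t s ht hs K hA.1 hB.1 hA'.1 hB'.1 hC.1 hD.1 eC eD
    (hpos hA hB) (hpos hA' hB') (hpos hC hD)
  rw [lin]
  have hc : 0 ≤ u ^ (1 - a) := by positivity
  have := mul_le_mul_of_nonneg_left hq hc
  linarith

lemma ando_convex_two {A' B' C D : Matrix (Fin d) (Fin d) ℂ} {t s : ℝ}
    (ht : 0 ≤ t) (hs : 0 ≤ s) (K : Matrix (Fin d) (Fin d) ℂ)
    (hA : A.PosDef) (hB : B.PosDef) (hA' : A'.PosDef) (hB' : B'.PosDef)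
    (hC : C.PosDef) (hD : D.PosDef)
    (eC : C = (t : ℂ) • A + (s : ℂ) • A') (eD : D = (t : ℂ) • B + (s : ℂ) • B') :
    (Kᴴ * mpow C 2 * K * mpow D (1 - 2)).trace.re ≤
    t * (Kᴴ * mpow A 2 * K * mpow B (1 - 2)).trace.re +
      s * (Kᴴ * mpow A' 2 * K * mpow B' (1 - 2)).trace.re := by
  have key : ∀ {P Q : Matrix (Fin d) (Fin d) ℂ} (hP : P.PosDef) (hQ : Q.PosDef),
      (Kᴴ * mpow P 2 * K * mpow Q (1 - 2)).trace.re =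
      dsum hP.1 hQ.1 K (fun x y => x ^ 2 / (0 * x + 1 * y)) := by
    intro P Q hP hQ
    rw [mpow, mpow, trace_dsum hP.1 hQ.1]
    apply dsum_congr
    intro i j
    have hy := hQ.eigenvalues_pos j
    rw [show (1 - 2 : ℝ) = -1 by norm_num, Real.rpow_neg_one, Real.rpow_two]
    simp [div_eq_mul_inv]
  have hpos : ∀ {P Q : Matrix (Fin d) (Fin d) ℂ} (hP : P.PosDef) (hQ : Q.PosDef) (i j),
      0 < 0 * hP.1.eigenvalues i + 1 * hQ.1.eigenvalues j := by
    intro P Q hP hQ i j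
    have hy := hQ.eigenvalues_pos j
    linarith
  rw [key hA hB, key hA' hB', key hC hD]
  exact quad_convex 0 1 t s ht hs K hA.1 hB.1 hA'.1 hB'.1 hC.1 hD.1 eC eD
    (hpos hA hB) (hpos hA' hB') (hpos hC hD)

open MeasureTheory Real in
lemma ando_convex {A' B' C D : Matrix (Fin d) (Fin d) ℂ} {a t s : ℝ} (ha1 : 1 < a) (ha2 : a ≤ 2)
    (ht : 0 ≤ t) (hs : 0 ≤ s) (K : Matrix (Fin d) (Fin d) ℂ)
    (hA : A.PosDef) (hB : B.PosDef) (hA' : A'.PosDef) (hB' : B'.PosDef)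
    (hC : C.PosDef) (hD : D.PosDef)
    (eC : C = (t : ℂ) • A + (s : ℂ) • A') (eD : D = (t : ℂ) • B + (s : ℂ) • B') :
    (Kᴴ * mpow C a * K * mpow D (1 - a)).trace.re ≤
    t * (Kᴴ * mpow A a * K * mpow B (1 - a)).trace.re +
      s * (Kᴴ * mpow A' a * K * mpow B' (1 - a)).trace.re := by
  rcases ha2.eq_or_lt with rfl | ha2
  · exact ando_convex_two ht hs K hA hB hA' hB' hC hD eC eD
  obtain ⟨μ, hμ⟩ := exists_measure_rpow_eq_integral_rpowIntegrand₀₁ (p := a - 1)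
    ⟨by linarith, by linarith⟩
  have key : ∀ {P Q : Matrix (Fin d) (Fin d) ℂ} (hP : P.PosDef) (hQ : Q.PosDef),
      Integrable (fun u => dsum hP.1 hQ.1 K
        (fun x y => x * rpowIntegrand₀₁ (a - 1) u (x / y))) (μ.restrict (Set.Ioi 0)) ∧
      (Kᴴ * mpow P a * K * mpow Q (1 - a)).trace.re =
      ∫ u in Set.Ioi 0, dsum hP.1 hQ.1 K
        (fun x y => x * rpowIntegrand₀₁ (a - 1) u (x / y)) ∂μ := by
    intro P Q hP hQ
    have hpos : ∀ i j, 0 ≤ hP.1.eigenvalues i / hQ.1.eigenvalues j := fun i j =>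
      div_nonneg (hP.eigenvalues_pos i).le (hQ.eigenvalues_pos j).le
    have h := dsum_integral hP.1 hQ.1 K (μ.restrict (Set.Ioi 0))
      (fun u x y => x * rpowIntegrand₀₁ (a - 1) u (x / y))
      (fun i j => (hμ _ (hpos i j)).1.const_mul _)
    refine ⟨h.1, ?_⟩
    rw [h.2, mpow, mpow, trace_dsum hP.1 hQ.1]
    apply dsum_congr
    intro i j
    rw [integral_const_mul, ← (hμ _ (hpos i j)).2]
    have hx := hP.eigenvalues_pos i
    have hy := hQ.eigenvalues_pos j
    generalize hP.1.eigenvalues i = x at *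
    generalize hQ.1.eigenvalues j = y at *
    rw [Real.div_rpow hx.le hy.le, Real.rpow_sub hx, Real.rpow_one, Real.rpow_sub hy,
      Real.rpow_sub hy, Real.rpow_one]
    have := (Real.rpow_pos_of_pos hx a).ne'
    have := (Real.rpow_pos_of_pos hy a).ne'
    field_simp
  rw [(key hA hB).2, (key hA' hB').2, (key hC hD).2, ← integral_const_mul, ← integral_const_mul,
    ← integral_add ((key hA hB).1.const_mul _) ((key hA' hB').1.const_mul _)]
  refine setIntegral_mono_on (key hC hD).1
    (((key hA hB).1.const_mul _).add ((key hA' hB').1.const_mul _))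
    measurableSet_Ioi fun u hu => ?_
  have hu : 0 < u := hu
  have hpos : ∀ {P Q : Matrix (Fin d) (Fin d) ℂ} (hP : P.PosDef) (hQ : Q.PosDef) (i j),
      0 < 1 * hP.1.eigenvalues i + u * hQ.1.eigenvalues j := by
    intro P Q hP hQ i j
    have hx := hP.eigenvalues_pos i
    have hy := hQ.eigenvalues_pos j
    positivity
  have expand : ∀ {P Q : Matrix (Fin d) (Fin d) ℂ} (hP : P.PosDef) (hQ : Q.PosDef),
      dsum hP.1 hQ.1 K (fun x y => x * rpowIntegrand₀₁ (a - 1) u (x / y)) =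
      (u ^ (a - 1) * u⁻¹) * dsum hP.1 hQ.1 K (fun x y => x ^ 2 / (1 * x + u * y)) := by
    intro P Q hP hQ
    rw [← dsum_smul]
    apply dsum_congr
    intro i j
    have hx := hP.eigenvalues_pos i
    have hy := hQ.eigenvalues_pos j
    generalize hP.1.eigenvalues i = x at *
    generalize hQ.1.eigenvalues j = y at *
    have h1 : 1 * x + u * y ≠ 0 := by positivity
    have h2 : u + x / y = (1 * x + u * y) / y := by field_simp; ring
    rw [rpowIntegrand₀₁, h2, inv_div]
    field_simp
    ring
  rw [expand hA hB, expand hA' hB', expand hC hD]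
  have hq := quad_convex 1 u t s ht hs K hA.1 hB.1 hA'.1 hB'.1 hC.1 hD.1 eC eD
    (hpos hA hB) (hpos hA' hB') (hpos hC hD)
  have hc : 0 ≤ u ^ (a - 1) * u⁻¹ := by positivity
  have := mul_le_mul_of_nonneg_left hq hc
  linarith

lemma comb_posSemidef {t s : ℝ} (ht : 0 ≤ t) (hs : 0 ≤ s) (hA : A.PosSemidef)
    (hB : B.PosSemidef) : ((t : ℂ) • A + (s : ℂ) • B).PosSemidef :=
  (hA.smul (by exact_mod_cast ht)).add (hB.smul (by exact_mod_cast hs))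

lemma comb_posDef {t : ℝ} (ht : t ∈ Set.Icc (0 : ℝ) 1) (hA : A.PosDef)
    (hB : B.PosDef) : ((t : ℂ) • A + ((1 - t : ℝ) : ℂ) • B).PosDef := by
  rcases ht.1.eq_or_lt with rfl | h
  · simpa using hB
  · exact (hA.smul (by exact_mod_cast h)).add_posSemidef
      (hB.posSemidef.smul (by exact_mod_cast sub_nonneg.2 ht.2))

lemma mpow_posSemidef (hA : A.PosSemidef) (a : ℝ) : (mpow A a).PosSemidef :=
  cfc_posSemidef hA.1 fun i => Real.rpow_nonneg (hA.eigenvalues_nonneg i) _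

lemma mpow_one' (hA : A.IsHermitian) : mpow A 1 = A := by
  simp only [mpow, Real.rpow_one]
  exact cfc_id' ℝ A hA.isSelfAdjoint

lemma kraus_posSemidef {n : ℕ} (K : Fin n → Matrix (Fin d) (Fin d) ℂ) (hA : A.PosSemidef) :
    (∑ i, K i * A * (K i)ᴴ).PosSemidef :=
  posSemidef_sum _ fun i _ => hA.mul_mul_conjTranspose_same (K i)

lemma kraus_trace {n : ℕ} (K : Fin n → Matrix (Fin d) (Fin d) ℂ) (X W : Matrix (Fin d) (Fin d) ℂ) :
    ((∑ i, K i * X * (K i)ᴴ) * W).trace.re =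
      ∑ i, ((K i)ᴴᴴ * X * (K i)ᴴ * W).trace.re := by
  simp only [Finset.sum_mul, trace_sum, Complex.re_sum, conjTranspose_conjTranspose]

lemma comb_trace (t s : ℝ) :
    ((t : ℂ) • A + (s : ℂ) • B).trace.re = t * A.trace.re + s * B.trace.re := by
  simp [trace_add, trace_smul]

lemma main_one {n : ℕ} (K : Fin n → Matrix (Fin d) (Fin d) ℂ) {t : ℝ}
    (ht : t ∈ Set.Icc (0 : ℝ) 1) (hA : A.PosDef) (hB : B.PosDef)
    (E : Matrix (Fin d) (Fin d) ℂ →ₗ[ℂ] Matrix (Fin d) (Fin d) ℂ)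
    (hE : ∀ X, E X = ∑ i, K i * X * (K i)ᴴ) :
    ((mpow (E (mpow ((t : ℂ) • A + ((1 - t : ℝ) : ℂ) • B) 1)) (1 / 1)).trace).re =
    t * ((mpow (E (mpow A 1)) (1 / 1)).trace).re
          + (1 - t) * ((mpow (E (mpow B 1)) (1 / 1)).trace).re := by
  have hC := comb_posDef ht hA hB
  have hH : ∀ {P : Matrix (Fin d) (Fin d) ℂ}, P.PosDef → (E P).IsHermitian := fun hP => by
    rw [hE]; exact (kraus_posSemidef K hP.posSemidef).1
  rw [div_one, mpow_one' hA.1, mpow_one' hB.1, mpow_one' hC.1, mpow_one' (hH hA),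
    mpow_one' (hH hB), mpow_one' (hH hC), map_add, map_smul, map_smul, comb_trace]

lemma main_concave {n : ℕ} (K : Fin n → Matrix (Fin d) (Fin d) ℂ) {a t : ℝ}
    (ha0 : 0 < a) (ha1 : a < 1)
    (ht : t ∈ Set.Icc (0 : ℝ) 1) (hA : A.PosDef) (hB : B.PosDef)
    (E : Matrix (Fin d) (Fin d) ℂ →ₗ[ℂ] Matrix (Fin d) (Fin d) ℂ)
    (hE : ∀ X, E X = ∑ i, K i * X * (K i)ᴴ) :
    t * ((mpow (E (mpow A a)) (1 / a)).trace).re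
          + (1 - t) * ((mpow (E (mpow B a)) (1 / a)).trace).re ≤
    ((mpow (E (mpow ((t : ℂ) • A + ((1 - t : ℝ) : ℂ) • B) a)) (1 / a)).trace).re := by
  have hC := comb_posDef ht hA hB
  have hs : 0 ≤ 1 - t := sub_nonneg.2 ht.2
  have hH : ∀ {P : Matrix (Fin d) (Fin d) ℂ}, P.PosDef → (E (mpow P a)).PosSemidef := fun hP => by
    rw [hE]; exact kraus_posSemidef K (mpow_posSemidef hP.posSemidef a)
  have hZ1 := mpow_posSemidef (hH hA) (1 / a)
  have hZ2 := mpow_posSemidef (hH hB) (1 / a)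
  have hZ := comb_posSemidef ht.1 hs hZ1 hZ2
  have y := young_upper (hH hC) hZ ha0 ha1
  have y1 := young_upper_eq (hH hA) ha0
  have y2 := young_upper_eq (hH hB) ha0
  have tr := comb_trace (A := mpow (E (mpow A a)) (1 / a)) (B := mpow (E (mpow B a)) (1 / a))
    t (1 - t)
  have L : t * (E (mpow A a) * mpow (mpow (E (mpow A a)) (1 / a)) (1 - a)).trace.re +
      (1 - t) * (E (mpow B a) * mpow (mpow (E (mpow B a)) (1 / a)) (1 - a)).trace.re ≤
      (E (mpow ((t : ℂ) • A + ((1 - t : ℝ) : ℂ) • B) a) *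
        mpow ((t : ℂ) • mpow (E (mpow A a)) (1 / a) +
          ((1 - t : ℝ) : ℂ) • mpow (E (mpow B a)) (1 / a)) (1 - a)).trace.re := by
    generalize mpow (E (mpow A a)) (1 / a) = Z1 at *
    generalize mpow (E (mpow B a)) (1 / a) = Z2 at *
    rw [hE, hE, hE, kraus_trace, kraus_trace, kraus_trace, Finset.mul_sum, Finset.mul_sum,
      ← Finset.sum_add_distrib]
    exact Finset.sum_le_sum fun i _ =>
      lieb_concave ha0 ha1 ht.1 hs (K i)ᴴ hA hZ1 hB hZ2 hC hZ rfl rfl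
  rw [y1, y2] at L
  rw [tr] at y
  have : a * (t * ((mpow (E (mpow A a)) (1 / a)).trace).re
          + (1 - t) * ((mpow (E (mpow B a)) (1 / a)).trace).re) ≤
    a * ((mpow (E (mpow ((t : ℂ) • A + ((1 - t : ℝ) : ℂ) • B) a)) (1 / a)).trace).re := by
    linarith
  exact le_of_mul_le_mul_left this ha0

lemma main_convex {n : ℕ} (K : Fin n → Matrix (Fin d) (Fin d) ℂ) {a t : ℝ}
    (ha1 : 1 < a) (ha2 : a ≤ 2)
    (ht : t ∈ Set.Icc (0 : ℝ) 1) (hA : A.PosDef) (hB : B.PosDef)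
    (E : Matrix (Fin d) (Fin d) ℂ →ₗ[ℂ] Matrix (Fin d) (Fin d) ℂ)
    (hE : ∀ X, E X = ∑ i, K i * X * (K i)ᴴ) :
    ((mpow (E (mpow ((t : ℂ) • A + ((1 - t : ℝ) : ℂ) • B) a)) (1 / a)).trace).re ≤
    t * ((mpow (E (mpow A a)) (1 / a)).trace).re
          + (1 - t) * ((mpow (E (mpow B a)) (1 / a)).trace).re := by
  have ha0 : 0 < a := by linarith
  have hC := comb_posDef ht hA hB
  have hs : 0 ≤ 1 - t := sub_nonneg.2 ht.2
  have hH : ∀ {P : Matrix (Fin d) (Fin d) ℂ}, P.PosDef → (E (mpow P a)).PosSemidef := fun hP => by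
    rw [hE]; exact kraus_posSemidef K (mpow_posSemidef hP.posSemidef a)
  have step : ∀ ε : ℝ, 0 < ε →
      ((mpow (E (mpow ((t : ℂ) • A + ((1 - t : ℝ) : ℂ) • B) a)) (1 / a)).trace).re ≤
      t * ∑ i, ((hH hA).1.eigenvalues i + ε) ^ (1 / a) +
      (1 - t) * ∑ i, ((hH hB).1.eigenvalues i + ε) ^ (1 / a) := by
    intro ε hε
    have hZ : ∀ {P : Matrix (Fin d) (Fin d) ℂ} (hP : P.PosSemidef),
        (cfc (fun x : ℝ => (x + ε) ^ (1 / a)) P).PosDef := fun hP =>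
      cfc_posDef_s9 hP.1 fun i =>
        Real.rpow_pos_of_pos (add_pos_of_nonneg_of_pos (hP.eigenvalues_nonneg i) hε) _
    have hZ1 := hZ (hH hA)
    have hZ2 := hZ (hH hB)
    have y1 := young_lower_eps (hH hA) ha1 hε
    have y2 := young_lower_eps (hH hB) ha1 hε
    generalize cfc (fun x : ℝ => (x + ε) ^ (1 / a)) (E (mpow A a)) = Z1 at *
    generalize cfc (fun x : ℝ => (x + ε) ^ (1 / a)) (E (mpow B a)) = Z2 at *
    have hD := comb_posDef ht hZ1 hZ2
    have y := young_lower (hH hC) hD ha1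
    have L : (E (mpow ((t : ℂ) • A + ((1 - t : ℝ) : ℂ) • B) a) *
        mpow ((t : ℂ) • Z1 + ((1 - t : ℝ) : ℂ) • Z2) (1 - a)).trace.re ≤
        t * (E (mpow A a) * mpow Z1 (1 - a)).trace.re +
        (1 - t) * (E (mpow B a) * mpow Z2 (1 - a)).trace.re := by
      rw [hE, hE, hE, kraus_trace, kraus_trace, kraus_trace, Finset.mul_sum, Finset.mul_sum,
        ← Finset.sum_add_distrib]
      exact Finset.sum_le_sum fun i _ =>
        ando_convex ha1 ha2 ht.1 hs (K i)ᴴ hA hZ1 hB hZ2 hC hD rfl rfl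
    rw [comb_trace] at y
    have m1 := mul_le_mul_of_nonneg_left y1 ht.1
    have m2 := mul_le_mul_of_nonneg_left y2 hs
    refine le_of_mul_le_mul_left ?_ ha0
    linarith
  have e1 : ((mpow (E (mpow A a)) (1 / a)).trace).re =
      ∑ i, ((hH hA).1.eigenvalues i + 0) ^ (1 / a) := by
    simp only [add_zero]; exact trace_cfc (hH hA).1 _
  have e2 : ((mpow (E (mpow B a)) (1 / a)).trace).re =
      ∑ i, ((hH hB).1.eigenvalues i + 0) ^ (1 / a) := by
    simp only [add_zero]; exact trace_cfc (hH hB).1 _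
  rw [e1, e2]
  have hcont : Continuous (fun ε : ℝ => t * ∑ i, ((hH hA).1.eigenvalues i + ε) ^ (1 / a) +
      (1 - t) * ∑ i, ((hH hB).1.eigenvalues i + ε) ^ (1 / a)) := by
    have hp : 0 ≤ 1 / a := by positivity
    refine Continuous.add (continuous_const.mul ?_) (continuous_const.mul ?_) <;>
    exact continuous_finsetSum _ fun i _ =>
      (continuous_const.add continuous_id).rpow_const fun _ => Or.inr hp
  have hlim := (hcont.tendsto 0).mono_left
    (nhdsWithin_le_nhds : nhdsWithin (0 : ℝ) (Set.Ioi 0) ≤ nhds 0)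
  refine ge_of_tendsto hlim ?_
  filter_upwards [self_mem_nhdsWithin] with ε hε
  exact step ε hε

end Aux

/-- For a CPTP map `E`, the function `A ↦ Tr((E(A^a))^(1/a))` is concave on positive
definite matrices for `a ∈ (0,1]` and convex on positive definite matrices for
`a ∈ [1,2]`. -/
theorem stmt_9 {d : ℕ}
    (E : Matrix (Fin d) (Fin d) ℂ →ₗ[ℂ] Matrix (Fin d) (Fin d) ℂ)
    (hKraus : ∃ (n : ℕ) (K : Fin n → Matrix (Fin d) (Fin d) ℂ),
      (∀ X, E X = ∑ i, K i * X * (K i)ᴴ) ∧ ∑ i, (K i)ᴴ * K i = 1) :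
    (∀ a ∈ Set.Ioc (0 : ℝ) 1, ∀ A B : Matrix (Fin d) (Fin d) ℂ,
      A.PosDef → B.PosDef → ∀ t : ℝ, t ∈ Set.Icc (0 : ℝ) 1 →
      t * ((mpow (E (mpow A a)) (1 / a)).trace).re
          + (1 - t) * ((mpow (E (mpow B a)) (1 / a)).trace).re
        ≤ ((mpow (E (mpow ((t : ℂ) • A + ((1 - t : ℝ) : ℂ) • B) a)) (1 / a)).trace).re) ∧
    (∀ a ∈ Set.Icc (1 : ℝ) 2, ∀ A B : Matrix (Fin d) (Fin d) ℂ,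
      A.PosDef → B.PosDef → ∀ t : ℝ, t ∈ Set.Icc (0 : ℝ) 1 →
      ((mpow (E (mpow ((t : ℂ) • A + ((1 - t : ℝ) : ℂ) • B) a)) (1 / a)).trace).re
        ≤ t * ((mpow (E (mpow A a)) (1 / a)).trace).re
          + (1 - t) * ((mpow (E (mpow B a)) (1 / a)).trace).re) := by
  obtain ⟨n, K, hE, -⟩ := hKraus
  constructor
  · intro a ha A B hA hB t ht
    rcases ha.2.eq_or_lt with rfl | h
    · exact (main_one K ht hA hB E hE).ge
    · exact main_concave K ha.1 h ht hA hB E hE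
  · intro a ha A B hA hB t ht
    rcases ha.1.eq_or_lt with rfl | h
    · exact (main_one K ht hA hB E hE).le
    · exact main_convex K h ha.2 ht hA hB E hE
end

section
/- Fix an orthonormal basis {|i⟩}_{i=1}^d of ℂ^d, let a ∈ (0,1)∪(1,2], and let ρ be a positive definite density matrix. Then the infimum over all diagonal (in the fixed basis) positive definite density matrices δ of S̃_a(ρ|δ) equals ((Σ_{i=1}^d ⟨i|ρ^a|i⟩^{1/a}) − 1)/(a − 1), where ⟨i|ρ^a|i⟩ denotes the i-th diagonal entry of ρ^a. -/
open Matrix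
open scoped ComplexOrder

theorem aux_eig {d : ℕ} (A : Matrix (Fin d) (Fin d) ℂ) (hA : A.IsHermitian) (w : Fin d → ℂ)
    (l : ℝ) (hw : A *ᵥ w = (l : ℂ) • w) (f : ℝ → ℝ) :
    (cfc f A) *ᵥ w = ((f l : ℝ) : ℂ) • w := by
  classical
  let s : Finset ℝ := insert l (Finset.univ.image hA.eigenvalues)
  let p : Polynomial ℝ := Lagrange.interpolate s id f
  have hp : ∀ x ∈ s, p.eval x = f x := fun x hx =>
    Lagrange.eval_interpolate_at_node (s := s) (v := id) f (Function.injective_id.injOn) hx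
  have h1 : cfc f A = Polynomial.aeval A p := by
    rw [← cfc_polynomial (R := ℝ) p A hA]
    apply cfc_congr
    intro x hx
    rw [hA.spectrum_real_eq_range_eigenvalues] at hx
    obtain ⟨i, rfl⟩ := hx
    exact (hp _ (by simp [s])).symm
  have h2 : ∀ q : Polynomial ℝ, (Polynomial.aeval A q) *ᵥ w = ((q.eval l : ℝ) : ℂ) • w := by
    intro q
    induction q using Polynomial.induction_on' with
    | add p q hp hq => simp [Matrix.add_mulVec, hp, hq, add_smul]
    | monomial n c =>
      have h3 : (A ^ n) *ᵥ w = ((l : ℂ) ^ n) • w := by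
        induction n with
        | zero => simp
        | succ n ih =>
          rw [pow_succ, ← Matrix.mulVec_mulVec, hw, Matrix.mulVec_smul, ih, smul_smul, pow_succ,
            mul_comm]
      rw [Polynomial.aeval_monomial, ← Matrix.mulVec_mulVec, h3, Matrix.mulVec_smul,
        Algebra.algebraMap_eq_smul_one, Matrix.smul_mulVec, Matrix.one_mulVec]
      ext i
      simp
      ring
  rw [h1, h2, hp l (by simp [s])]

theorem aux_pos {d : ℕ} (A : Matrix (Fin d) (Fin d) ℂ) (hA : A.PosDef) (t : ℝ) :
    (mpow A t).PosDef := by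
  have h := hA.isHermitian
  unfold mpow
  rw [h.cfc_eq, IsHermitian.cfc, Unitary.conjStarAlgAut_apply]
  refine (Matrix.IsUnit.posDef_star_right_conjugate_iff (Unitary.isUnit_coe)).2 ?_
  rw [Matrix.posDef_diagonal_iff]
  intro i
  have := hA.eigenvalues_pos i
  simpa using Real.rpow_pos_of_pos this t

theorem aux_sum_s15 {d : ℕ} (c g : Fin d → ℝ) (hc : ∀ i, 0 < c i) (hg : ∀ i, 0 < g i)
    (hs : ∑ i, g i = 1) (a : ℝ) (ha : a ∈ Set.Ioo (0 : ℝ) 1 ∪ Set.Ioc (1 : ℝ) 2) :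
    ((∑ i, c i ^ (1 / a)) - 1) / (a - 1) ≤
      ((∑ i, g i ^ (1 - a) * c i) ^ (1 / a) - 1) / (a - 1) := by
  have ha0 : 0 < a := by rcases ha with h | h <;> linarith [h.1]
  have e1 : ∀ i, g i * (c i ^ (1 / a) / g i) = c i ^ (1 / a) := fun i =>
    mul_div_cancel₀ _ (hg i).ne'
  have e2 : ∀ i, g i * (c i ^ (1 / a) / g i) ^ a = g i ^ (1 - a) * c i := fun i => by
    rw [Real.div_rpow (Real.rpow_nonneg (hc i).le _) (hg i).le, ← Real.rpow_mul (hc i).le,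
      one_div_mul_cancel ha0.ne', Real.rpow_one, Real.rpow_sub (hg i), Real.rpow_one]
    ring
  have hx : ∀ i, 0 < c i ^ (1 / a) / g i := fun i =>
    div_pos (Real.rpow_pos_of_pos (hc i) _) (hg i)
  rcases ha with h | h
  · have := Real.rpow_arith_mean_le_arith_mean_rpow Finset.univ g
      (fun i => (c i ^ (1 / a) / g i) ^ a) (fun i _ => (hg i).le) hs
      (fun i _ => Real.rpow_nonneg (hx i).le _) (p := 1 / a) ((one_le_div ha0).2 h.2.le)
    have e3 : ∀ i, ((c i ^ (1 / a) / g i) ^ a) ^ (1 / a) = c i ^ (1 / a) / g i := fun i => by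
      rw [← Real.rpow_mul (hx i).le, mul_one_div_cancel ha0.ne', Real.rpow_one]
    simp only [e2, e3, e1] at this
    exact div_le_div_of_nonpos_of_le (by linarith [h.2]) (by linarith)
  · have := Real.arith_mean_le_rpow_mean Finset.univ g
      (fun i => c i ^ (1 / a) / g i) (fun i _ => (hg i).le) hs
      (fun i _ => (hx i).le) (p := a) h.1.le
    simp only [e2, e1] at this
    exact div_le_div_of_nonneg_right (by linarith) (by linarith [h.1])

theorem aux_eq {d : ℕ} (c : Fin d → ℝ) (hc : ∀ i, 0 < c i) (S : ℝ) (a : ℝ) (ha : 0 < a)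
    (hS : S = ∑ i, c i ^ (1 / a)) (hS0 : 0 < S) :
    (∑ i, (c i ^ (1 / a) / S) ^ (1 - a) * c i) ^ (1 / a) = S := by
  have e : ∀ i, (c i ^ (1 / a) / S) ^ (1 - a) * c i = c i ^ (1 / a) * S ^ (a - 1) := fun i => by
    have hp := Real.rpow_pos_of_pos (hc i) (1 / a)
    rw [Real.div_rpow hp.le hS0.le, Real.rpow_sub hp, ← Real.rpow_mul (hc i).le (1 / a) a,
      one_div_mul_cancel ha.ne', Real.rpow_one, Real.rpow_one,
      show a - 1 = -(1 - a) by ring, Real.rpow_neg hS0.le]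
    have := (hc i).ne'
    have := (Real.rpow_pos_of_pos hS0 (1 - a)).ne'
    field_simp
  simp only [e]
  rw [← Finset.sum_mul, ← hS]
  nth_rewrite 1 [← Real.rpow_one S]
  rw [← Real.rpow_add hS0, ← Real.rpow_mul hS0.le, show (1 + (a - 1)) * (1 / a) = 1 by field_simp; ring,
    Real.rpow_one]

theorem aux_res {d : ℕ} (v : Fin d → (Fin d → ℂ))
    (honb : ∀ i j, star (v i) ⬝ᵥ v j = if i = j then 1 else 0) :
    ∑ i, vecMulVec (v i) (star (v i)) = (1 : Matrix (Fin d) (Fin d) ℂ) := by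
  let U : Matrix (Fin d) (Fin d) ℂ := Matrix.of fun j i => v i j
  have h : Uᴴ * U = 1 := by
    ext i j
    have := honb i j
    simpa [Matrix.mul_apply, U, dotProduct, Matrix.one_apply] using this
  have h' := mul_eq_one_comm.1 h
  rw [← h']
  ext i j
  simp [Matrix.mul_apply, U, vecMulVec_apply, Matrix.sum_apply]

theorem aux_eigv {d : ℕ} (v : Fin d → (Fin d → ℂ))
    (honb : ∀ i j, star (v i) ⬝ᵥ v j = if i = j then 1 else 0) (f : Fin d → ℂ) (j : Fin d) :
    (∑ i, f i • vecMulVec (v i) (star (v i))) *ᵥ v j = f j • v j := by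
  simp [Matrix.sum_mulVec, Matrix.smul_mulVec, vecMulVec_mulVec, honb]

theorem aux_tr {d : ℕ} (v : Fin d → (Fin d → ℂ))
    (honb : ∀ i j, star (v i) ⬝ᵥ v j = if i = j then 1 else 0)
    (M N : Matrix (Fin d) (Fin d) ℂ) (f : Fin d → ℂ) (h : ∀ i, N *ᵥ v i = f i • v i) :
    (M * N).trace = ∑ i, f i * (star (v i) ⬝ᵥ M *ᵥ v i) := by
  rw [← Matrix.mul_one (M * N), ← aux_res v honb, Finset.mul_sum, Matrix.trace_sum]
  refine Finset.sum_congr rfl fun i _ => ?_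
  rw [mul_vecMulVec, trace_vecMulVec, ← Matrix.mulVec_mulVec, h, Matrix.mulVec_smul,
    smul_dotProduct, dotProduct_comm, smul_eq_mul]

theorem aux_ts {d : ℕ} (v : Fin d → (Fin d → ℂ))
    (honb : ∀ i j, star (v i) ⬝ᵥ v j = if i = j then 1 else 0)
    (a : ℝ) (ρ δ : Matrix (Fin d) (Fin d) ℂ) (hδ : δ.IsHermitian) (g : Fin d → ℝ)
    (h : ∀ i, δ *ᵥ v i = (g i : ℂ) • v i) :
    tsallis a ρ δ = ((∑ i, g i ^ (1 - a) * (star (v i) ⬝ᵥ (mpow ρ a).mulVec (v i)).re) ^ (1 / a)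
      - 1) / (a - 1) := by
  unfold tsallis
  rw [aux_tr v honb (mpow ρ a) (mpow δ (1 - a)) (fun i => ((g i ^ (1 - a) : ℝ) : ℂ))
    (fun i => aux_eig δ hδ (v i) (g i) (h i) _)]
  simp only [Complex.re_sum, Complex.re_ofReal_mul]

theorem aux_inf {ι : Type*} (F : ι → ℝ) (m : ℝ) (x : ι) (h : ∀ y, m ≤ F y) (hx : F x = m) :
    (⨅ y, F y) = m := by
  haveI : Nonempty ι := ⟨x⟩
  apply le_antisymm
  · rw [← hx]
    exact ciInf_le ⟨m, by rintro _ ⟨y, rfl⟩; exact h y⟩ x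
  · exact le_ciInf h

/-- Coherence: for an orthonormal basis `{v i}` with rank-one projections
`P i = |i⟩⟨i|`, `a ∈ (0,1) ∪ (1,2]` and a positive definite density matrix `ρ`,
the infimum of `S̃_a(ρ|δ)` over positive definite density matrices `δ` that are
diagonal in the basis equals `((Σ_i ⟨i|ρ^a|i⟩^(1/a)) - 1)/(a - 1)`. -/
theorem stmt_15 {d : ℕ}
    (v : Fin d → (Fin d → ℂ))
    (honb : ∀ i j, star (v i) ⬝ᵥ v j = if i = j then 1 else 0)
    (P : Fin d → Matrix (Fin d) (Fin d) ℂ)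
    (hP : ∀ i, P i = vecMulVec (v i) (star (v i)))
    (a : ℝ) (ha : a ∈ Set.Ioo (0 : ℝ) 1 ∪ Set.Ioc (1 : ℝ) 2)
    (ρ : Matrix (Fin d) (Fin d) ℂ) (hρ : ρ.PosDef) (hρtr : ρ.trace = 1) :
    (⨅ δ : {δ : Matrix (Fin d) (Fin d) ℂ //
        δ.PosDef ∧ δ.trace = 1 ∧ ∃ f : Fin d → ℂ, δ = ∑ i, f i • P i},
        tsallis a ρ (δ : Matrix (Fin d) (Fin d) ℂ))
      = ((∑ i, ((star (v i) ⬝ᵥ (mpow ρ a).mulVec (v i)).re) ^ (1 / a)) - 1)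
          / (a - 1) := by
  have hP' : P = fun i => vecMulVec (v i) (star (v i)) := funext hP
  subst hP'
  have hv0 : ∀ i, v i ≠ 0 := fun i h0 => by
    have := honb i i
    simp [h0] at this
  have ha0 : 0 < a := by rcases ha with h | h <;> linarith [h.1]
  set c : Fin d → ℝ := fun i => (star (v i) ⬝ᵥ (mpow ρ a).mulVec (v i)).re with hcdef
  have hc : ∀ i, 0 < c i := fun i =>
    (Complex.lt_def.1 ((aux_pos ρ hρ a).dotProduct_mulVec_pos (hv0 i))).1
  have hd : Nonempty (Fin d) := by
    by_contra hne
    rw [not_nonempty_iff] at hne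
    simp [Matrix.trace] at hρtr
  set S : ℝ := ∑ i, c i ^ (1 / a) with hS
  have hS0 : 0 < S := Finset.sum_pos (fun i _ => Real.rpow_pos_of_pos (hc i) _)
    Finset.univ_nonempty
  -- the optimal diagonal state
  let g : Fin d → ℝ := fun i => c i ^ (1 / a) / S
  have hg : ∀ i, 0 < g i := fun i => div_pos (Real.rpow_pos_of_pos (hc i) _) hS0
  have hgs : ∑ i, g i = 1 := by
    simp only [g]
    rw [← Finset.sum_div, ← hS, div_self hS0.ne']
  let δ₀ : Matrix (Fin d) (Fin d) ℂ := ∑ i, (g i : ℂ) • vecMulVec (v i) (star (v i))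
  have htr : ∀ f : Fin d → ℂ, (∑ i, f i • vecMulVec (v i) (star (v i))).trace = ∑ i, f i := by
    intro f
    have := aux_tr v honb 1 _ f (aux_eigv v honb f)
    simpa [honb] using this
  have hpsd : δ₀.PosSemidef := by
    refine Matrix.posSemidef_sum _ fun i _ => ?_
    exact (Matrix.posSemidef_vecMulVec_self_star (v i)).smul
      (by exact_mod_cast (hg i).le)
  have hpd : δ₀.PosDef := by
    rw [hpsd.posDef_iff_isUnit]
    have : δ₀ * (∑ i, ((g i)⁻¹ : ℂ) • vecMulVec (v i) (star (v i))) = 1 := by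
      rw [← aux_res v honb, Finset.mul_sum]
      refine Finset.sum_congr rfl fun i _ => ?_
      rw [Matrix.mul_smul, mul_vecMulVec, aux_eigv v honb, smul_vecMulVec, smul_smul,
        inv_mul_cancel₀ (by exact_mod_cast (hg i).ne'), one_smul]
    exact IsUnit.of_mul_eq_one _ this
  have hmem : δ₀.PosDef ∧ δ₀.trace = 1 ∧ ∃ f : Fin d → ℂ,
      δ₀ = ∑ i, f i • vecMulVec (v i) (star (v i)) :=
    ⟨hpd, by rw [htr]; exact_mod_cast hgs, _, rfl⟩
  have hlb : ∀ δ : {δ : Matrix (Fin d) (Fin d) ℂ //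
      δ.PosDef ∧ δ.trace = 1 ∧ ∃ f : Fin d → ℂ, δ = ∑ i, f i • vecMulVec (v i) (star (v i))},
      (S - 1) / (a - 1) ≤ tsallis a ρ (δ : Matrix (Fin d) (Fin d) ℂ) := by
    rintro ⟨δ, hδ, hδtr, f, hf⟩
    have he : ∀ i, δ *ᵥ v i = f i • v i := fun i => by rw [hf, aux_eigv v honb]
    have hfpos : ∀ i, 0 < f i := fun i => by
      have := hδ.dotProduct_mulVec_pos (hv0 i)
      rw [he, dotProduct_smul, honb] at this
      simpa using this
    have hre : ∀ i, f i = ((f i).re : ℂ) := fun i =>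
      Complex.ext (by simp) (by simpa using (Complex.lt_def.1 (hfpos i)).2.symm)
    have hsum : ∑ i, (f i).re = 1 := by
      rw [hf, htr] at hδtr
      rw [← Complex.re_sum, hδtr, Complex.one_re]
    show _ ≤ tsallis a ρ δ
    rw [aux_ts v honb a ρ δ hδ.isHermitian (fun i => (f i).re) (fun i => by rw [he, ← hre])]
    exact aux_sum_s15 c _ hc (fun i => (Complex.lt_def.1 (hfpos i)).1) hsum a ha
  have hval : tsallis a ρ δ₀ = (S - 1) / (a - 1) := by
    rw [aux_ts v honb a ρ δ₀ hpd.isHermitian g (fun i => aux_eigv v honb _ i)]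
    have := aux_eq c hc S a ha0 hS hS0
    rw [this]
  clear_value δ₀
  exact aux_inf _ _ ⟨δ₀, hmem⟩ hlb hval
end
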